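/- arXiv:2205.04938 — 2 statements merged into one kernel-verified Lean document; each statement's English description precedes it below -/
import Mathlib

section
/- Let T be a semistandard Young tableau of rectangular shape a × b with entries at most k, let B be a box of T, and let B* be the box corresponding to B under 180° rotation of the rectangle. Then the multiset of entries of box B over the promotion orbit segment {Pro^i(T) : 0 ≤ i ≤ k−1} equals the multiset {k+1−m : m ∈ Dist(T,B*)}, where Dist(T,B*) is the corresponding multiset of entries of B*. -/
open scoped Classical

/-- `T ∈ SSYT_k(a × b)`: a filling of the `a × b` rectangle (rows indexed by `Fin a`,
columns by `Fin b`) with entries in `{1,…,k}`, weakly increasing along rows and strictly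
increasing down columns. -/
def IsSSYT (a b k : ℕ) (T : Fin a → Fin b → ℤ) : Prop :=
  (∀ x y, 1 ≤ T x y ∧ T x y ≤ (k : ℤ)) ∧
  (∀ (x : Fin a) (y y' : Fin b), y ≤ y' → T x y ≤ T x y') ∧
  (∀ (y : Fin b) (x x' : Fin a), x < x' → T x y < T x' y)

/-- The Bender–Knuth involution `ρ_j` on rectangular fillings.  An entry `j` in box
`(x,y)` is free if the box below does not contain `j+1`; an entry `j+1` is free if the
box above does not contain `j`.  In each row, the `a` free `j`'s followed by `b` free
`(j+1)`'s are replaced by `b` free `j`'s followed by `a` free `(j+1)`'s: a free box gets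
the value `j` precisely when its rank among the free boxes of its row is at most the
number of free `(j+1)`'s. -/
noncomputable def bk (a b : ℕ) (j : ℤ) (T : Fin a → Fin b → ℤ) : Fin a → Fin b → ℤ :=
  fun x y =>
    let low : Fin b → Prop := fun y' =>
      T x y' = j ∧ ∀ h : (x : ℕ) + 1 < a, T ⟨(x : ℕ) + 1, h⟩ y' ≠ j + 1
    let high : Fin b → Prop := fun y' =>
      T x y' = j + 1 ∧ ∀ x' : Fin a, (x' : ℕ) + 1 = (x : ℕ) → T x' y' ≠ j
    if low y ∨ high y then
      if (Finset.univ.filter (fun y' : Fin b => (low y' ∨ high y') ∧ y' ≤ y)).card ≤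
          (Finset.univ.filter (fun y' : Fin b => high y')).card
      then j else j + 1
    else T x y

/-- Promotion `Pro = ρ_{k−1} ∘ ⋯ ∘ ρ_2 ∘ ρ_1` on fillings of the `a × b` rectangle with
entries at most `k` (so `ρ_1` is applied first). -/
noncomputable def pro (a b k : ℕ) (T : Fin a → Fin b → ℤ) : Fin a → Fin b → ℤ :=
  (List.range (k - 1)).foldl (fun S i => bk a b ((i : ℤ) + 1) S) T

/-- `SSYTDist(T,B)`: the multiset of entries of box `B = (x,y)` over the promotion orbit
segment `{Pro^i(T) : 0 ≤ i ≤ k−1}`. -/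
noncomputable def SSYTDist (a b k : ℕ) (T : Fin a → Fin b → ℤ) (x : Fin a) (y : Fin b) :
    Multiset ℤ :=
  (Multiset.range k).map (fun i => (pro a b k)^[i] T x y)

/-!
The tableau `T` is encoded by its Gelfand–Tsetlin pattern `N d r`, the number of entries at most `d`
in row `r`. A Bender–Knuth involution toggles one row of the pattern by the piecewise-linear rule
`x ↦ min + max - x`, and promotion toggles the rows one after the other. Reading the promotion orbit
of the pattern along diagonals therefore gives an orbit of piecewise-linear rowmotion on the
rectangle `[1, a] × [1, k - a]`.

This orbit is the tropicalization of an orbit of birational rowmotion over the hyperreals, whose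
labels are of the order `ω ^ n`. There the reciprocity theorem of Grinberg and Roby, in the
lattice-path approach of Musiker and Roby, says that the label of a cell is the inverse, up to a
constant factor, of the label of the rotated cell at a later time: for a cell of the last column
both are the same lattice-path sum, and the rowmotion relation propagates the claim column by
column.

Comparing exponents yields `N_i d r + N_{i+d} (k - d) (a + 1 - r) = b` for the patterns `N_i` of
`Pro^i T`. Applied twice, this shows that promotion has order dividing `k`. Moreover an entry of
`Pro^i T` is at most `d` exactly when the complement of the rotated entry of `Pro^(i+d) T` is, so
that the two multisets have the same number of elements at most `d`, for every `d`.
-/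

namespace RectanglePromotion

/-- `(u, v)` is a cell of the rectangle `[1, a] × [1, q]`, the poset on which rowmotion acts. -/
def InRect (a q u v : ℕ) : Prop := 1 ≤ u ∧ u ≤ a ∧ 1 ≤ v ∧ v ≤ q

section PathSum

variable {R : Type*} [CommSemiring R]

/-- The sum, over all lattice paths with unit steps in the two coordinate directions that leave
`(i, 0)` upwards and end in `(u, v)`, of the product of the weights `w` of their vertices in the
open quadrant. -/
def pathSum (w : ℕ → ℕ → R) (i : ℕ) : ℕ → ℕ → R
  | u, 0 => if u = i then 1 else 0
  | 0, _ + 1 => 0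
  | u + 1, v + 1 => w (u + 1) (v + 1) * (pathSum w i u (v + 1) + pathSum w i (u + 1) v)
termination_by u v => u + v

section

variable (w : ℕ → ℕ → R) (i : ℕ)

lemma pathSum_zero_right (u : ℕ) : pathSum w i u 0 = if u = i then 1 else 0 := by
  cases u <;> simp [pathSum]

lemma pathSum_zero_succ (v : ℕ) : pathSum w i 0 (v + 1) = 0 := by
  simp [pathSum]

lemma pathSum_succ_succ (u v : ℕ) : pathSum w i (u + 1) (v + 1) =
    w (u + 1) (v + 1) * (pathSum w i u (v + 1) + pathSum w i (u + 1) v) := by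
  rw [pathSum]

lemma pathSum_eq_zero_of_lt {i : ℕ} : ∀ u v : ℕ, u < i → pathSum w i u v = 0
  | u, 0, hu => by rw [pathSum_zero_right, if_neg hu.ne]
  | 0, v + 1, _ => pathSum_zero_succ w i v
  | u + 1, v + 1, hu => by
    rw [pathSum_succ_succ, pathSum_eq_zero_of_lt u (v + 1) (by omega),
      pathSum_eq_zero_of_lt (u + 1) v hu, add_zero, mul_zero]
termination_by u v => u + v

end

variable {a q : ℕ}

lemma pathSum_congr {w w' : ℕ → ℕ → R} (h : ∀ u v, InRect a q u v → w u v = w' u v) (i : ℕ) :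
    ∀ u v, u ≤ a → v ≤ q → pathSum w i u v = pathSum w' i u v
  | u, 0, _, _ => by simp only [pathSum_zero_right]
  | 0, v + 1, _, _ => by simp only [pathSum_zero_succ]
  | u + 1, v + 1, hu, hv => by
    rw [pathSum_succ_succ, pathSum_succ_succ, h _ _ ⟨by omega, hu, by omega, hv⟩,
      pathSum_congr h i u (v + 1) (by omega) hv, pathSum_congr h i (u + 1) v hu (by omega)]
termination_by u v => u + v

variable {w g : ℕ → ℕ → R}

lemma sum_pathSum_mul_column_succ (i : ℕ) {v : ℕ} (hv : v < q)
    (hg : ∀ u v, InRect a q u v → g u v = w u v * (g (u + 1) v + g u (v + 1))) :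
    ∀ n ≤ a, ∑ u ∈ Finset.range n, pathSum w i (u + 1) (v + 1) * g (u + 1) (v + 2)
        + pathSum w i n (v + 1) * g (n + 1) (v + 1)
      = ∑ u ∈ Finset.range n, pathSum w i (u + 1) v * g (u + 1) (v + 1)
  | 0, _ => by simp [pathSum_zero_succ]
  | n + 1, hn => by
    have hgn := hg (n + 1) (v + 1) ⟨by omega, hn, by omega, hv⟩
    rw [Finset.sum_range_succ, Finset.sum_range_succ,
      ← sum_pathSum_mul_column_succ i hv hg n (by omega), pathSum_succ_succ, hgn]
    ring

-- Every path crosses from column `v` to column `v + 1` exactly once, so the pairing of `pathSum`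
-- with `g` along such a cut does not depend on `v`.
lemma pathSum_eq_of_backward_recurrence (hq : 1 ≤ q)
    (hg : ∀ u v, InRect a q u v → g u v = w u v * (g (u + 1) v + g u (v + 1)))
    (g_end : g (a + 1) q = 1) (g_top : ∀ v < q, g (a + 1) v = 0) (g_right : ∀ u, g u (q + 1) = 0)
    {i : ℕ} (hi : 1 ≤ i) (hia : i ≤ a) : pathSum w i a q = g i 1 := by
  have cut : ∀ v < q, ∑ u ∈ Finset.range a, pathSum w i (u + 1) v * g (u + 1) (v + 1) = g i 1 := by
    intro v
    induction v with
    | zero =>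
      intro _
      rw [Finset.sum_eq_single (i - 1)]
      · rw [pathSum_zero_right, if_pos (by omega), Nat.sub_add_cancel hi, one_mul]
      · intro u _ hu
        rw [pathSum_zero_right, if_neg (by omega), zero_mul]
      · intro h
        rw [Finset.mem_range] at h
        omega
    | succ v ih =>
      intro hv
      have column := sum_pathSum_mul_column_succ i (by omega : v < q) hg a le_rfl
      rw [g_top _ hv, mul_zero, add_zero, ih (by omega)] at column
      exact column
  obtain ⟨v, rfl⟩ := Nat.exists_eq_add_of_le' hq
  have last_column := sum_pathSum_mul_column_succ i (by omega : v < v + 1) hg a le_rfl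
  rw [cut v (by omega), g_end, mul_one] at last_column
  simpa [g_right] using last_column

end PathSum

section Birational

variable {K : Type*} [Field K]

/-- The values outside the rectangle: `1` just below the minimal cell `(1, 1)`, `B` just above the
maximal cell `(a, q)`, and `0` elsewhere. Since `0⁻¹ = 0`, the value `0` contributes nothing to
`lowerSum`, nor to `upperParallelSum`. -/
def boundary (a q : ℕ) (B : K) (u v : ℕ) : K :=
  if u = 0 ∧ v = 1 then 1 else if u = a + 1 ∧ v = q then B else 0

/-- The sum of the labels of the cells covered by `(u, v)`. -/
def lowerSum (f : ℕ → ℕ → K) (u v : ℕ) : K := f (u - 1) v + f u (v - 1)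

/-- The parallel sum (half the harmonic mean) of the labels of the cells covering `(u, v)`. -/
def upperParallelSum (f : ℕ → ℕ → K) (u v : ℕ) : K := ((f (u + 1) v)⁻¹ + (f u (v + 1))⁻¹)⁻¹

/-- The down-transfer of a labeling: it determines `f` through path sums (`eq_pathSum`). -/
def downTransfer (f : ℕ → ℕ → K) (u v : ℕ) : K := f u v / lowerSum f u v

/-- The up-transfer of a labeling: rowmotion carries the down-transfer to it. -/
def upTransfer (f : ℕ → ℕ → K) (u v : ℕ) : K := upperParallelSum f u v / f u v

/-- `f'` is the image of `f` under birational rowmotion on the rectangle `[1, a] × [1, q]`. -/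
def IsRowmotion (a q : ℕ) (f f' : ℕ → ℕ → K) : Prop :=
  ∀ u v, InRect a q u v → f' u v * f u v = lowerSum f u v * upperParallelSum f' u v

/-- Birational rowmotion, computed from the top cell downwards; `B` is the label above the top. -/
noncomputable def rowmotion (a q : ℕ) (B : K) (f : ℕ → ℕ → K) (u v : ℕ) : K :=
  if InRect a q u v then
    lowerSum f u v *
      ((rowmotion a q B f (u + 1) v)⁻¹ + (rowmotion a q B f u (v + 1))⁻¹)⁻¹ / f u v
  else boundary a q B u v
termination_by (a + 1 - u) + (q + 1 - v)
decreasing_by all_goals grind [InRect]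

variable {a q : ℕ} {B : K} {f : ℕ → ℕ → K} {u v : ℕ}

lemma rowmotion_of_inRect (hi : InRect a q u v) : rowmotion a q B f u v =
    lowerSum f u v * upperParallelSum (rowmotion a q B f) u v / f u v := by
  rw [rowmotion, if_pos hi, upperParallelSum]

lemma rowmotion_of_not_inRect (hi : ¬ InRect a q u v) :
    rowmotion a q B f u v = boundary a q B u v := by
  rw [rowmotion, if_neg hi]

lemma inv_eq_of_rowmotion_dual {f₀ f₁ s x y P : K} (hB : B ≠ 0) (hP : P ≠ 0)
    (rel : f₁ * f₀ = (s + x) * P)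
    (dual_rel : B * f₁⁻¹ * (B * f₀⁻¹) = B * P⁻¹ * ((B * s⁻¹)⁻¹ + y⁻¹)⁻¹) : y = B * x⁻¹ := by
  have parallel : B * (s + x)⁻¹ = ((B * s⁻¹)⁻¹ + y⁻¹)⁻¹ :=
    calc B * (s + x)⁻¹ = B⁻¹ * P * (B * B * ((s + x) * P)⁻¹) := by field_simp
      _ = B⁻¹ * P * (B * f₁⁻¹ * (B * f₀⁻¹)) := by rw [← rel, mul_inv, mul_mul_mul_comm B B]
      _ = ((B * s⁻¹)⁻¹ + y⁻¹)⁻¹ := by rw [dual_rel]; field_simp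
  have sum_eq : B⁻¹ * s + B⁻¹ * x = B⁻¹ * s + y⁻¹ := by
    rw [← inv_inj, ← mul_add, mul_inv, inv_inv, parallel, mul_inv B, inv_inv]
  rw [← inv_inv y, ← add_left_cancel sum_eq, mul_inv, inv_inv]

variable [LinearOrder K]

/-- A positive labeling of the rectangle `[1, a] × [1, q]`, extended by `boundary`. -/
structure IsLabeling (a q : ℕ) (B : K) (f : ℕ → ℕ → K) : Prop where
  pos_top : 0 < B
  pos : ∀ u v, InRect a q u v → 0 < f u v
  eq_boundary : ∀ u v, ¬ InRect a q u v → f u v = boundary a q B u v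

lemma boundary_nonneg [IsStrictOrderedRing K] (hB : 0 < B) : 0 ≤ boundary a q B u v := by
  unfold boundary
  split_ifs <;> positivity

namespace IsLabeling

lemma apply_zero_one (h : IsLabeling a q B f) : f 0 1 = 1 := by
  rw [h.eq_boundary _ _ (by unfold InRect; omega), boundary, if_pos ⟨rfl, rfl⟩]

lemma apply_top (h : IsLabeling a q B f) : f (a + 1) q = B := by
  rw [h.eq_boundary _ _ (by unfold InRect; omega), boundary, if_neg (by omega), if_pos ⟨rfl, rfl⟩]

lemma eq_zero (h : IsLabeling a q B f) (hout : ¬ InRect a q u v) (hbot : ¬ (u = 0 ∧ v = 1))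
    (htop : ¬ (u = a + 1 ∧ v = q)) : f u v = 0 := by
  rw [h.eq_boundary _ _ hout, boundary, if_neg hbot, if_neg htop]

lemma apply_succ_zero (h : IsLabeling a q B f) (hq : 1 ≤ q) (u : ℕ) : f (u + 1) 0 = 0 :=
  h.eq_zero (by unfold InRect; omega) (by omega) (by omega)

lemma mul_inv_rotate {f' : ℕ → ℕ → K} (h : IsLabeling a q B f) (h' : IsLabeling a q B f')
    {u' v' : ℕ} (hu : u + u' = a + 1) (hv : v + v' = q + 1) (hout : ¬ InRect a q u v) :
    f' u' v' = B * (f u v)⁻¹ := by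
  have hout' : ¬ InRect a q u' v' := by unfold InRect at *; omega
  by_cases hbot : u = 0 ∧ v = 1
  · obtain ⟨rfl, rfl⟩ := hbot
    obtain ⟨rfl, rfl⟩ : u' = a + 1 ∧ v' = q := by omega
    rw [h.apply_zero_one, h'.apply_top, inv_one, mul_one]
  by_cases htop : u = a + 1 ∧ v = q
  · obtain ⟨rfl, rfl⟩ := htop
    obtain ⟨rfl, rfl⟩ : u' = 0 ∧ v' = 1 := by omega
    rw [h.apply_top, h'.apply_zero_one, mul_inv_cancel₀ h.pos_top.ne']
  · rw [h.eq_zero hout hbot htop, h'.eq_zero hout' (by omega) (by omega), inv_zero, mul_zero]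

lemma isRowmotion (h : IsLabeling a q B f) :
    IsRowmotion a q f (rowmotion a q B f) := fun u v hi => by
  rw [rowmotion_of_inRect hi, div_mul_cancel₀ _ (h.pos u v hi).ne']

lemma pathSum_upTransfer_zero (h : IsLabeling a q B f) {i : ℕ} (hi : 1 ≤ i) (hq : 1 ≤ q)
    (hu : u < a) : pathSum (upTransfer f) i u 0 =
      f u 1 / f (u + 1) 1 * pathSum (downTransfer f) (i + 1) (u + 1) 1
        - pathSum (downTransfer f) (i + 1) u 1 := by
  rcases Nat.eq_zero_or_pos u with rfl | hu0
  · rw [pathSum_eq_zero_of_lt _ _ _ hi, pathSum_eq_zero_of_lt _ _ _ (by omega),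
      pathSum_eq_zero_of_lt _ _ _ (by omega), mul_zero, sub_zero]
  have f_pos := h.pos u 1 ⟨hu0, hu.le, le_rfl, hq⟩
  have f_succ_pos := h.pos (u + 1) 1 ⟨by omega, hu, le_rfl, hq⟩
  have transfer_eq : downTransfer f (u + 1) 1 = f (u + 1) 1 / f u 1 := by
    rw [downTransfer, lowerSum, Nat.sub_self, h.apply_succ_zero hq, add_zero, Nat.add_sub_cancel]
  rw [pathSum_succ_succ, transfer_eq, pathSum_zero_right, pathSum_zero_right]
  simp only [Nat.add_right_cancel_iff]
  field_simp
  ring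

variable [IsStrictOrderedRing K]

lemma nonneg (h : IsLabeling a q B f) (u v : ℕ) : 0 ≤ f u v := by
  by_cases hi : InRect a q u v
  · exact (h.pos u v hi).le
  · rw [h.eq_boundary u v hi]
    exact boundary_nonneg h.pos_top

lemma lowerSum_pos (h : IsLabeling a q B f) (hi : InRect a q u v) : 0 < lowerSum f u v := by
  have ⟨hu, hua, hv, hvq⟩ := hi
  rcases hv.eq_or_lt with rfl | hv
  · refine add_pos_of_pos_of_nonneg ?_ (h.nonneg _ _)
    rcases hu.eq_or_lt with rfl | hu
    · rw [Nat.sub_self, h.apply_zero_one]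
      exact one_pos
    · exact h.pos _ _ ⟨by omega, by omega, le_rfl, hvq⟩
  · exact add_pos_of_nonneg_of_pos (h.nonneg _ _) (h.pos _ _ ⟨hu, hua, by omega, by omega⟩)

end IsLabeling

variable [IsStrictOrderedRing K]

lemma upperParallelSum_pos (hB : 0 < B)
    (hout : ∀ u v, ¬ InRect a q u v → f u v = boundary a q B u v) (hi : InRect a q u v)
    (hup : InRect a q (u + 1) v → 0 < f (u + 1) v)
    (hright : InRect a q u (v + 1) → 0 < f u (v + 1)) : 0 < upperParallelSum f u v := by
  have nonneg_of_imp {x y : ℕ} (hxy : InRect a q x y → 0 < f x y) : 0 ≤ (f x y)⁻¹ := by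
    rw [inv_nonneg]
    by_cases h : InRect a q x y
    · exact (hxy h).le
    · rw [hout x y h]
      exact boundary_nonneg hB
  have ⟨hu, hua, hv, hvq⟩ := hi
  refine inv_pos.2 ?_
  rcases hvq.eq_or_lt with rfl | hvq
  · refine add_pos_of_pos_of_nonneg (inv_pos.2 ?_) (nonneg_of_imp hright)
    rcases hua.eq_or_lt with rfl | hua
    · rwa [hout _ _ (by unfold InRect; omega), boundary, if_neg (by omega), if_pos ⟨rfl, rfl⟩]
    · exact hup ⟨by omega, hua, hv, le_rfl⟩
  · exact add_pos_of_nonneg_of_pos (nonneg_of_imp hup) (inv_pos.2 (hright ⟨hu, hua, by omega, hvq⟩))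

namespace IsLabeling

lemma rowmotion_pos (h : IsLabeling a q B f) (u v : ℕ) (hi : InRect a q u v) :
    0 < rowmotion a q B f u v := by
  rw [rowmotion_of_inRect hi]
  refine div_pos (mul_pos (h.lowerSum_pos hi) ?_) (h.pos u v hi)
  exact upperParallelSum_pos h.pos_top (fun _ _ => rowmotion_of_not_inRect) hi
    (h.rowmotion_pos (u + 1) v) (h.rowmotion_pos u (v + 1))
termination_by (a + 1 - u) + (q + 1 - v)
decreasing_by all_goals (unfold InRect at hi; omega)

lemma rowmotion (h : IsLabeling a q B f) : IsLabeling a q B (rowmotion a q B f) :=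
  ⟨h.pos_top, h.rowmotion_pos, fun _ _ => rowmotion_of_not_inRect⟩

lemma downTransfer_mul_lowerSum (h : IsLabeling a q B f) (hi : InRect a q u v) :
    downTransfer f u v * lowerSum f u v = f u v :=
  div_mul_cancel₀ _ (h.lowerSum_pos hi).ne'

lemma eq_pathSum (h : IsLabeling a q B f) : ∀ u v, u < a → v < q →
    f (u + 1) (v + 1) = pathSum (downTransfer f) 1 (u + 1) (v + 1)
  | u, v, hu, hv => by
    rw [pathSum_succ_succ, ← h.downTransfer_mul_lowerSum ⟨by omega, hu, by omega, hv⟩]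
    congr 1
    match u, v with
    | 0, 0 => simp [lowerSum, pathSum_zero_succ, pathSum_zero_right, h.apply_zero_one,
        h.apply_succ_zero (by omega) 0]
    | u + 1, 0 =>
      simp [lowerSum, ← h.eq_pathSum u 0 (by omega) hv, pathSum_zero_right,
        h.apply_succ_zero (by omega) (u + 1)]
    | 0, v + 1 =>
      have apply_zero : f 0 (v + 1 + 1) = 0 :=
        h.eq_zero (by unfold InRect; omega) (by omega) (by omega)
      simp [lowerSum, ← h.eq_pathSum 0 v hu (by omega), pathSum_zero_succ, apply_zero]
    | u + 1, v + 1 =>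
      rw [← h.eq_pathSum u (v + 1) (by omega) hv, ← h.eq_pathSum (u + 1) v hu (by omega)]
      rfl
termination_by u v => u + v

lemma pathSum_upTransfer (h : IsLabeling a q B f) {i : ℕ} (hi : 1 ≤ i) :
    ∀ u v, u < a → v < q → pathSum (upTransfer f) i u v =
      f u (v + 1) / f (u + 1) (v + 1) * pathSum (downTransfer f) (i + 1) (u + 1) (v + 1)
        - pathSum (downTransfer f) (i + 1) u (v + 1)
  | u, 0, hu, hv => h.pathSum_upTransfer_zero hi hv hu
  | 0, v + 1, _, _ => by
    rw [pathSum_eq_zero_of_lt _ _ _ hi, pathSum_eq_zero_of_lt _ _ _ (by omega),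
      pathSum_eq_zero_of_lt _ _ _ (by omega), mul_zero, sub_zero]
  | u + 1, v + 1, hu, hv => by
    have f12_pos := h.pos (u + 1) (v + 2) ⟨by omega, hu.le, by omega, hv⟩
    have f21_pos := h.pos (u + 2) (v + 1) ⟨by omega, hu, by omega, hv.le⟩
    have f11_pos := h.pos (u + 1) (v + 1) ⟨by omega, hu.le, by omega, hv.le⟩
    have f22_pos := h.pos (u + 2) (v + 2) ⟨by omega, hu, by omega, hv⟩
    have sum12_pos := h.lowerSum_pos (u := u + 1) (v := v + 1 + 1) ⟨by omega, hu.le, by omega, hv⟩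
    have rec12 := pathSum_succ_succ (downTransfer f) (i + 1) u (v + 1)
    have rec22 := pathSum_succ_succ (downTransfer f) (i + 1) (u + 1) (v + 1)
    rw [pathSum_succ_succ, h.pathSum_upTransfer hi u (v + 1) (by omega) hv,
      h.pathSum_upTransfer hi (u + 1) v hu (by omega)]
    simp only [downTransfer, upTransfer, lowerSum, upperParallelSum,
      Nat.add_sub_cancel] at rec12 rec22 sum12_pos ⊢
    generalize pathSum (downTransfer f) (i + 1) = H at *
    have sum_eq : f u (v + 1 + 1) / f (u + 1) (v + 1 + 1) * H (u + 1) (v + 1 + 1)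
          - H u (v + 1 + 1) + (f (u + 1) (v + 1) / f (u + 1 + 1) (v + 1) * H (u + 1 + 1) (v + 1)
          - H (u + 1) (v + 1))
        = f (u + 1) (v + 1) * (H (u + 1 + 1) (v + 1) / f (u + 1 + 1) (v + 1)
          - H (u + 1) (v + 1 + 1) / f (u + 1) (v + 1 + 1)) := by
      rw [rec12]
      field_simp
      ring
    rw [sum_eq, rec22]
    field_simp
    ring
termination_by u v => u + v

lemma pathSum_upTransfer_last_column (h : IsLabeling a q B f) {i : ℕ} (hi : 1 ≤ i) (hq : 1 ≤ q) :
    ∀ u < a, pathSum (upTransfer f) i u q = pathSum (downTransfer f) (i + 1) (u + 1) q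
  | 0, _ => by rw [pathSum_eq_zero_of_lt _ _ _ hi, pathSum_eq_zero_of_lt _ _ _ (by omega)]
  | u + 1, hu => by
    have ih := h.pathSum_upTransfer_last_column hi hq u (by omega)
    obtain ⟨v, rfl⟩ := Nat.exists_eq_add_of_le' hq
    have f_pos := h.pos (u + 1) (v + 1) ⟨by omega, hu.le, hq, le_rfl⟩
    have f_succ_pos := h.pos (u + 1 + 1) (v + 1) ⟨by omega, hu, hq, le_rfl⟩
    have apply_right : f (u + 1) (v + 1 + 1) = 0 :=
      h.eq_zero (by unfold InRect; omega) (by omega) (by omega)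
    rw [pathSum_succ_succ, ih, h.pathSum_upTransfer hi (u + 1) v hu (by omega), upTransfer,
      upperParallelSum, apply_right, inv_zero, add_zero, inv_inv]
    field_simp
    ring

end IsLabeling

lemma IsRowmotion.upTransfer_eq_downTransfer {f' : ℕ → ℕ → K} (hR : IsRowmotion a q f f')
    (hf : IsLabeling a q B f) (hf' : IsLabeling a q B f') (hi : InRect a q u v) :
    upTransfer f' u v = downTransfer f u v := by
  rw [upTransfer, downTransfer, div_eq_div_iff (hf'.pos u v hi).ne' (hf.lowerSum_pos hi).ne',
    mul_comm, ← hR u v hi, mul_comm]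

/-- A forward orbit `F 0, F 1, …` of birational rowmotion on positive labelings. -/
structure IsRowmotionOrbit (a q : ℕ) (B : K) (F : ℕ → ℕ → ℕ → K) : Prop where
  isLabeling : ∀ l, IsLabeling a q B (F l)
  isRowmotion : ∀ l, IsRowmotion a q (F l) (F (l + 1))

namespace IsRowmotionOrbit

variable {F : ℕ → ℕ → ℕ → K}

lemma pathSum_last_column_shift (h : IsRowmotionOrbit a q B F) (hq : 1 ≤ q) (l u : ℕ) :
    ∀ n, u + n ≤ a → pathSum (downTransfer (F l)) 1 u q
      = pathSum (downTransfer (F (l + n))) (1 + n) (u + n) q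
  | 0, _ => rfl
  | n + 1, hn => by
    have transfer_eq : ∀ x y, InRect a q x y →
        upTransfer (F (l + n + 1)) x y = downTransfer (F (l + n)) x y := fun _ _ hi =>
      (h.isRowmotion (l + n)).upTransfer_eq_downTransfer (h.isLabeling _) (h.isLabeling _) hi
    rw [h.pathSum_last_column_shift hq l u n (by omega),
      ← pathSum_congr transfer_eq _ _ _ (by omega) le_rfl,
      (h.isLabeling _).pathSum_upTransfer_last_column (by omega) hq _ (by omega)]
    rfl

lemma top_mul_inv_recurrence (h : IsRowmotionOrbit a q B F) (l u v : ℕ) (hi : InRect a q u v) :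
    B * (F (l + 1) u v)⁻¹ = downTransfer (F l) u v *
      (B * (F (l + 1) (u + 1) v)⁻¹ + B * (F (l + 1) u (v + 1))⁻¹) := by
  have hF := h.isLabeling (l + 1)
  have upper_pos : 0 < upperParallelSum (F (l + 1)) u v :=
    upperParallelSum_pos hF.pos_top hF.eq_boundary hi (hF.pos _ _) (hF.pos _ _)
  rw [← (h.isRowmotion l).upTransfer_eq_downTransfer (h.isLabeling l) hF hi, upTransfer, ← mul_add,
    ← inv_inv ((F (l + 1) (u + 1) v)⁻¹ + _), ← upperParallelSum]
  field_simp

lemma last_column_reciprocity (h : IsRowmotionOrbit a q B F) (hq : 1 ≤ q) {l m u u' : ℕ}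
    (hu : 1 ≤ u) (hu' : 1 ≤ u') (huu' : u + u' = a + 1) (hm : m = l + u') :
    F l u q = B * (F m u' 1)⁻¹ := by
  obtain ⟨n, rfl⟩ := Nat.exists_eq_add_of_le hu'
  obtain ⟨x, rfl⟩ := Nat.exists_eq_add_of_le' hu
  obtain ⟨y, rfl⟩ := Nat.exists_eq_add_of_le' hq
  obtain rfl : m = l + n + 1 := by omega
  have hF := h.isLabeling (l + n + 1)
  have apply_eq_zero {u v : ℕ} (huv : u = a + 1 ∧ v < y + 1 ∨ v = y + 1 + 1) :
      F (l + n + 1) u v = 0 :=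
    hF.eq_zero (by unfold InRect; omega) (by omega) (by omega)
  rw [(h.isLabeling l).eq_pathSum x y (by omega) (by omega),
    h.pathSum_last_column_shift hq l (x + 1) n (by omega), show x + 1 + n = a by omega]
  refine pathSum_eq_of_backward_recurrence (g := fun u v => B * (F (l + n + 1) u v)⁻¹) hq
    (h.top_mul_inv_recurrence (l + n)) ?_ ?_ ?_ (by omega) (by omega)
  · rw [hF.apply_top, mul_inv_cancel₀ hF.pos_top.ne']
  · intro v hv
    rw [apply_eq_zero (.inl ⟨rfl, hv⟩), inv_zero, mul_zero]
  · intro u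
    rw [apply_eq_zero (.inr rfl), inv_zero, mul_zero]

theorem reciprocity (h : IsRowmotionOrbit a q B F) {l m u v u' v' : ℕ}
    (huu' : u + u' = a + 1) (hvv' : v + v' = q + 1) (hm : m + 1 = l + u' + v') :
    F m u' v' = B * (F l u v)⁻¹ := by
  by_cases hi : InRect a q u v
  swap
  · exact (h.isLabeling l).mul_inv_rotate (h.isLabeling m) huu' hvv' hi
  have ⟨hu, hua, hv, hvq⟩ := hi
  have top_ne : B ≠ 0 := (h.isLabeling 0).pos_top.ne'
  obtain ⟨w, rfl⟩ : ∃ w, v' = w + 1 := ⟨v' - 1, by omega⟩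
  rcases Nat.eq_zero_or_pos w with rfl | hw
  · obtain rfl : v = q := by omega
    have := h.last_column_reciprocity (hv.trans hvq) hu (by omega) huu' (show m = l + u' by omega)
    rw [this, mul_inv, inv_inv, mul_inv_cancel_left₀ top_ne]
  -- All cells around `(u, v + 1)` and its rotation satisfy the claim by induction, except `(u, v)`.
  obtain ⟨p, rfl⟩ : ∃ p, m = p + 1 := ⟨m - 1, by omega⟩
  have pivot : InRect a q u (v + 1) := ⟨hu, hua, by omega, by omega⟩
  have hF := h.isLabeling (l + 1)
  have dual_before := h.reciprocity (l := l) (m := p) (v := v + 1) (v' := w) huu'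
    (by omega) (by omega)
  have dual_after := h.reciprocity (l := l + 1) (m := p + 1) (v := v + 1) (v' := w) huu'
    (by omega) (by omega)
  have dual_left := h.reciprocity (l := l + 1) (m := p) (u := u + 1) (u' := u' - 1) (v := v + 1)
    (v' := w) (by omega) (by omega) (by omega)
  have dual_below := h.reciprocity (l := l + 1) (m := p) (v := v + 1 + 1) (v' := w - 1) huu'
    (by omega) (by omega)
  have dual_right := h.reciprocity (l := l) (m := p + 1) (u := u - 1) (u' := u' + 1) (v := v + 1)
    (v' := w) (by omega) (by omega) (by omega)
  have dual_rel := h.isRowmotion p u' w ⟨by omega, by omega, hw, by omega⟩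
  rw [dual_before, dual_after, lowerSum, dual_left, dual_below, upperParallelSum, dual_right,
    ← mul_add, ← inv_inv ((F (l + 1) (u + 1) (v + 1))⁻¹ + _), ← upperParallelSum] at dual_rel
  exact inv_eq_of_rowmotion_dual top_ne
    (upperParallelSum_pos hF.pos_top hF.eq_boundary pivot (hF.pos _ _) (hF.pos _ _)).ne'
    (h.isRowmotion l u (v + 1) pivot) dual_rel
termination_by v'

end IsRowmotionOrbit

end Birational

section Growth

variable {K : Type*} [Field K] [LinearOrder K] [IsStrictOrderedRing K]

/-- `x` is positive of the same order of magnitude as `τ ^ n`. For infinitely large `τ` the exponent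
is unique, and passing to it tropicalizes identities between positive elements. -/
def HasGrowth (τ x : K) (n : ℤ) : Prop :=
  0 < x ∧ ArchimedeanClass.mk x = ArchimedeanClass.mk (τ ^ n)

variable {τ x y : K} {m n c : ℤ}

lemma hasGrowth_zpow (hτ : 0 < τ) (n : ℤ) : HasGrowth τ (τ ^ n) n :=
  ⟨zpow_pos hτ n, rfl⟩

namespace HasGrowth

lemma mul (hτ : 0 < τ) (hx : HasGrowth τ x n) (hy : HasGrowth τ y m) :
    HasGrowth τ (x * y) (n + m) := by
  refine ⟨mul_pos hx.1 hy.1, ?_⟩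
  rw [zpow_add₀ hτ.ne', ArchimedeanClass.mk_mul, ArchimedeanClass.mk_mul, hx.2, hy.2]

lemma inv (hx : HasGrowth τ x n) : HasGrowth τ x⁻¹ (-n) := by
  refine ⟨inv_pos.2 hx.1, ?_⟩
  rw [zpow_neg, ArchimedeanClass.mk_inv, ArchimedeanClass.mk_inv, hx.2]

lemma add (hτ : 1 ≤ τ) (hx : HasGrowth τ x n) (hy : HasGrowth τ y m) :
    HasGrowth τ (x + y) (max n m) := by
  wlog hnm : n ≤ m generalizing x y n m
  · rw [add_comm, max_comm]
    exact this hy hx (le_of_not_ge hnm)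
  have hτ_pos : 0 < τ := one_pos.trans_le hτ
  refine ⟨add_pos hx.1 hy.1, ?_⟩
  have mk_le : ArchimedeanClass.mk y ≤ ArchimedeanClass.mk x := by
    rw [hx.2, hy.2]
    exact ArchimedeanClass.mk_antitoneOn (zpow_pos hτ_pos n).le (zpow_pos hτ_pos m).le
      (zpow_le_zpow_right₀ hτ hnm)
  rw [max_eq_right hnm, ← hy.2]
  exact le_antisymm
    (ArchimedeanClass.mk_antitoneOn hy.1.le (add_pos hx.1 hy.1).le (le_add_of_nonneg_left hx.1.le))
    (ArchimedeanClass.mk_right_le_mk_add mk_le)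

lemma exponent_unique (hτ : 1 ≤ τ) (hinf : ArchimedeanClass.mk τ < 0) (hn : HasGrowth τ x n)
    (hm : HasGrowth τ x m) : n = m := by
  wlog hlt : n < m generalizing n m
  · by_contra hne
    exact hne (this hm hn (by omega)).symm
  have hτ_pos : 0 < τ := one_pos.trans_le hτ
  have mk_quotient_neg : ArchimedeanClass.mk (τ ^ (m - n)) < 0 :=
    (ArchimedeanClass.mk_antitoneOn hτ_pos.le (zpow_pos hτ_pos _).le
      (by simpa using zpow_le_zpow_right₀ hτ (show 1 ≤ m - n by omega))).trans_lt hinf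
  have mk_quotient : ArchimedeanClass.mk (τ ^ (m - n)) = 0 := by
    refine ArchimedeanClass.add_left_cancel_of_ne_top (x := ArchimedeanClass.mk (τ ^ n)) ?_ ?_
    · exact ArchimedeanClass.mk_eq_top_iff.not.2 (zpow_pos hτ_pos n).ne'
    · rw [← ArchimedeanClass.mk_mul, ← zpow_add₀ hτ_pos.ne', add_sub_cancel, add_zero, ← hn.2, hm.2]
  exact absurd mk_quotient mk_quotient_neg.ne

end HasGrowth

/-- `x` grows like `τ ^ n`, or is the boundary value `0`, whose exponent is recorded as `c`. -/
def HasGrowthOrZero (τ : K) (c : ℤ) (x : K) (n : ℤ) : Prop :=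
  HasGrowth τ x n ∨ x = 0 ∧ n = c

namespace HasGrowthOrZero

lemma inv (hx : HasGrowthOrZero τ c x n) : HasGrowthOrZero τ (-c) x⁻¹ (-n) := by
  rcases hx with hx | ⟨rfl, rfl⟩
  · exact .inl hx.inv
  · exact .inr ⟨inv_zero, rfl⟩

lemma add (hτ : 1 ≤ τ) (hx : HasGrowthOrZero τ c x n) (hy : HasGrowthOrZero τ c y m) (hn : c ≤ n)
    (hm : c ≤ m) (hpos : 0 < x + y) : HasGrowth τ (x + y) (max n m) := by
  rcases hx with hx | ⟨rfl, rfl⟩ <;> rcases hy with hy | ⟨rfl, rfl⟩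
  · exact hx.add hτ hy
  · rwa [add_zero, max_eq_left hn]
  · rwa [zero_add, max_eq_right hm]
  · simp at hpos

lemma parallelSum (hτ : 1 ≤ τ) (hx : HasGrowthOrZero τ c x n) (hy : HasGrowthOrZero τ c y m)
    (hn : n ≤ c) (hm : m ≤ c) (hpos : 0 < (x⁻¹ + y⁻¹)⁻¹) :
    HasGrowth τ (x⁻¹ + y⁻¹)⁻¹ (min n m) := by
  have growth := (hx.inv.add hτ hy.inv (by omega) (by omega) (inv_pos.1 hpos)).inv
  rwa [max_neg_neg, neg_neg] at growth

end HasGrowthOrZero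

end Growth

section Tropical

variable {a q : ℕ} {b : ℤ} {M M' : ℕ → ℕ → ℤ} {u v : ℕ}

/-- An integer labeling with values in `[0, b]` of the rectangle `[1, a] × [1, q]`, extended by `0`
below and to the left of the rectangle and by `b` above and to the right of it. -/
structure IsTropicalLabeling (a q : ℕ) (b : ℤ) (M : ℕ → ℕ → ℤ) : Prop where
  nonneg : ∀ u v, 0 ≤ M u v
  le : ∀ u v, M u v ≤ b
  zero_left : ∀ v, M 0 v = 0
  zero_right : ∀ u ≤ a, M u 0 = 0
  top_left : ∀ v, M (a + 1) v = b
  top_right : ∀ u, 1 ≤ u → M u (q + 1) = b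

/-- The tropicalization of `IsRowmotion`: `M'` is the image of `M` under piecewise-linear
rowmotion. -/
def IsTropicalRowmotion (a q : ℕ) (M M' : ℕ → ℕ → ℤ) : Prop :=
  ∀ u v, InRect a q u v → M' u v + M u v =
    max (M (u - 1) v) (M u (v - 1)) + min (M' (u + 1) v) (M' u (v + 1))

variable {K : Type*} [Field K] [LinearOrder K] [IsStrictOrderedRing K] {τ : K} {f f' : ℕ → ℕ → K}

lemma IsLabeling.hasGrowthOrZero_below (hf : IsLabeling a q (τ ^ b) f)
    (hM : IsTropicalLabeling a q b M) (hu : u ≤ a) (hv : v ≤ q)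
    (growth : InRect a q u v → HasGrowth τ (f u v) (M u v)) :
    HasGrowthOrZero τ 0 (f u v) (M u v) := by
  by_cases hi : InRect a q u v
  · exact .inl (growth hi)
  have hM0 : M u v = 0 := by
    rcases Nat.eq_zero_or_pos u with rfl | hu0
    · exact hM.zero_left v
    · obtain rfl : v = 0 := by unfold InRect at hi; omega
      exact hM.zero_right u hu
  by_cases hbot : u = 0 ∧ v = 1
  · refine .inl ?_
    rw [hM0, hbot.1, hbot.2, hf.apply_zero_one]
    exact ⟨one_pos, by rw [zpow_zero]⟩
  · exact .inr ⟨hf.eq_zero hi hbot (by omega), hM0⟩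

lemma IsLabeling.hasGrowthOrZero_above (hτ : 0 < τ) (hf : IsLabeling a q (τ ^ b) f)
    (hM : IsTropicalLabeling a q b M) (hu : 1 ≤ u) (hua : u ≤ a + 1) (hv : 1 ≤ v) (hvq : v ≤ q + 1)
    (growth : InRect a q u v → HasGrowth τ (f u v) (M u v)) :
    HasGrowthOrZero τ b (f u v) (M u v) := by
  by_cases hi : InRect a q u v
  · exact .inl (growth hi)
  have hMb : M u v = b := by
    rcases hua.eq_or_lt with rfl | hua
    · exact hM.top_left v
    · obtain rfl : v = q + 1 := by unfold InRect at hi; omega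
      exact hM.top_right u hu
  by_cases htop : u = a + 1 ∧ v = q
  · refine .inl ?_
    rw [hMb, htop.1, htop.2, hf.apply_top]
    exact hasGrowth_zpow hτ b
  · exact .inr ⟨hf.eq_zero hi (by omega) htop, hMb⟩

lemma IsRowmotion.hasGrowth (hτ : 1 ≤ τ) (hf : IsLabeling a q (τ ^ b) f)
    (hf' : IsLabeling a q (τ ^ b) f') (hR : IsRowmotion a q f f') (hM : IsTropicalLabeling a q b M)
    (hM' : IsTropicalLabeling a q b M') (hMR : IsTropicalRowmotion a q M M')
    (growth : ∀ u v, InRect a q u v → HasGrowth τ (f u v) (M u v)) (u v : ℕ)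
    (hi : InRect a q u v) : HasGrowth τ (f' u v) (M' u v) := by
  have ⟨hu, hua, hv, hvq⟩ := hi
  have hτ_pos : 0 < τ := one_pos.trans_le hτ
  have growth_lower : HasGrowth τ (lowerSum f u v) (max (M (u - 1) v) (M u (v - 1))) :=
    (hf.hasGrowthOrZero_below hM (by omega) hvq (growth _ _)).add hτ
      (hf.hasGrowthOrZero_below hM hua (by omega) (growth _ _))
      (hM.nonneg _ _) (hM.nonneg _ _) (hf.lowerSum_pos hi)
  have growth_upper : HasGrowth τ (upperParallelSum f' u v) (min (M' (u + 1) v) (M' u (v + 1))) :=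
    (hf'.hasGrowthOrZero_above hτ_pos hM' (by omega) (by omega) hv (by omega)
        (hR.hasGrowth hτ hf hf' hM hM' hMR growth (u + 1) v)).parallelSum hτ
      (hf'.hasGrowthOrZero_above hτ_pos hM' hu (by omega) (by omega) (by omega)
        (hR.hasGrowth hτ hf hf' hM hM' hMR growth u (v + 1)))
      (hM'.le _ _) (hM'.le _ _)
      (upperParallelSum_pos hf'.pos_top hf'.eq_boundary hi (hf'.pos _ _) (hf'.pos _ _))
  have label_eq : f' u v = lowerSum f u v * upperParallelSum f' u v * (f u v)⁻¹ := by
    rw [← hR u v hi, mul_inv_cancel_right₀ (hf.pos u v hi).ne']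
  have exponent_eq : M' u v =
      max (M (u - 1) v) (M u (v - 1)) + min (M' (u + 1) v) (M' u (v + 1)) + -M u v := by
    rw [← hMR u v hi, add_neg_cancel_right]
  rw [label_eq, exponent_eq]
  exact (growth_lower.mul hτ_pos growth_upper).mul hτ_pos (growth u v hi).inv
termination_by (a + 1 - u) + (q + 1 - v)

/-- The labeling by powers of `τ` with exponents `M`, a birational lift of the tropical labeling
`M`. -/
noncomputable def powerLabeling (a q : ℕ) (b : ℤ) (τ : K) (M : ℕ → ℕ → ℤ) (u v : ℕ) : K :=
  if InRect a q u v then τ ^ M u v else boundary a q (τ ^ b) u v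

lemma isLabeling_powerLabeling (hτ : 0 < τ) (M : ℕ → ℕ → ℤ) :
    IsLabeling a q (τ ^ b) (powerLabeling a q b τ M) where
  pos_top := zpow_pos hτ b
  pos u v hi := by
    rw [powerLabeling, if_pos hi]
    exact zpow_pos hτ _
  eq_boundary u v hi := if_neg hi

lemma isRowmotionOrbit_iterate {B : K} (hf : IsLabeling a q B f) :
    IsRowmotionOrbit a q B (fun l => (rowmotion a q B)^[l] f) := by
  have isLabeling : ∀ l, IsLabeling a q B ((rowmotion a q B)^[l] f) := fun l => by
    induction l with
    | zero => exact hf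
    | succ l ih =>
      rw [Function.iterate_succ_apply']
      exact ih.rowmotion
  refine ⟨isLabeling, fun l => ?_⟩
  simp only [Function.iterate_succ_apply']
  exact (isLabeling l).isRowmotion

theorem tropical_reciprocity {L : ℕ → ℕ → ℕ → ℤ}
    (hL : ∀ l, IsTropicalLabeling a q b (L l))
    (hR : ∀ l, IsTropicalRowmotion a q (L l) (L (l + 1))) {l m u v u' v' : ℕ}
    (hi : InRect a q u v) (huu' : u + u' = a + 1) (hvv' : v + v' = q + 1)
    (hm : m + 1 = l + u' + v') : L m u' v' + L l u v = b := by
  set τ := Hyperreal.omega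
  have hinf : ArchimedeanClass.mk τ < 0 := Hyperreal.archimedeanClassMk_omega_neg
  have hτ_pos : 0 < τ := Hyperreal.omega_pos
  have hτ : 1 ≤ τ := (ArchimedeanClass.lt_of_mk_lt_mk_of_nonneg hinf hτ_pos.le).le
  set F := fun l => (rowmotion a q (τ ^ b))^[l] (powerLabeling a q b τ (L 0))
  have orbit : IsRowmotionOrbit a q (τ ^ b) F :=
    isRowmotionOrbit_iterate (isLabeling_powerLabeling hτ_pos (L 0))
  have growth (l : ℕ) : ∀ u v, InRect a q u v → HasGrowth τ (F l u v) (L l u v) := by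
    induction l with
    | zero =>
      intro u v hi
      have apply_zero : F 0 u v = τ ^ L 0 u v := if_pos hi
      rw [apply_zero]
      exact hasGrowth_zpow hτ_pos _
    | succ l ih =>
      exact (orbit.isRowmotion l).hasGrowth hτ (orbit.isLabeling l) (orbit.isLabeling (l + 1))
        (hL l) (hL (l + 1)) (hR l) ih
  have growth_dual : HasGrowth τ (F m u' v') (b + -L l u v) := by
    rw [orbit.reciprocity huu' hvv' hm]
    exact (hasGrowth_zpow hτ_pos b).mul hτ_pos (growth l u v hi).inv
  have hi' : InRect a q u' v' := by unfold InRect at hi ⊢; omega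
  have := (growth m u' v' hi').exponent_unique hτ hinf growth_dual
  omega

end Tropical

section GelfandTsetlin

/-- The Gelfand–Tsetlin patterns of semistandard tableaux of shape `a × b` with entries in `[1, k]`:
`N d r` is the number of entries at most `d` in row `r`, rows being numbered from `1`. The extension
by `b` for `r = 0` and by `0` for `r > a` keeps the interlacing inequalities true. -/
structure IsGTPattern (a b k : ℕ) (N : ℤ → ℕ → ℤ) : Prop where
  row_zero : ∀ d, N d 0 = b
  eq_zero_of_row_gt : ∀ d r, a < r → N d r = 0
  le_succ : ∀ d r, N d r ≤ N (d + 1) r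
  interlace : ∀ d r, N (d + 1) (r + 1) ≤ N d r
  eq_zero_of_nonpos : ∀ d r, d ≤ 0 → 1 ≤ r → N d r = 0
  eq_of_le : ∀ d r, (k : ℤ) ≤ d → r ≤ a → N d r = b

/-- The piecewise-linear toggle of row `j` of a Gelfand–Tsetlin pattern, which is the effect of the
Bender–Knuth involution `ρ_j`. -/
def toggle (j : ℤ) (N : ℤ → ℕ → ℤ) : ℤ → ℕ → ℤ :=
  Function.update N j fun r =>
    min (N (j + 1) r) (N (j - 1) (r - 1)) + max (N (j + 1) (r + 1)) (N (j - 1) r) - N j r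

variable {a b k : ℕ} {N : ℤ → ℕ → ℤ} {j d : ℤ} {r : ℕ}

lemma toggle_self (j : ℤ) (N : ℤ → ℕ → ℤ) (r : ℕ) : toggle j N j r =
    min (N (j + 1) r) (N (j - 1) (r - 1)) + max (N (j + 1) (r + 1)) (N (j - 1) r) - N j r := by
  rw [toggle, Function.update_self]

lemma toggle_of_ne (hd : d ≠ j) (N : ℤ → ℕ → ℤ) : toggle j N d = N d :=
  Function.update_of_ne hd _ _

lemma toggle_toggle (j : ℤ) (N : ℤ → ℕ → ℤ) : toggle j (toggle j N) = N := by
  funext d r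
  by_cases hd : d = j
  · subst hd
    rw [toggle_self, toggle_of_ne (by omega), toggle_of_ne (by omega), toggle_self]
    ring
  · rw [toggle_of_ne hd, toggle_of_ne hd]

namespace IsGTPattern

lemma monotone (h : IsGTPattern a b k N) (r : ℕ) : Monotone (N · r) :=
  monotone_int_of_le_succ (h.le_succ · r)

lemma nonneg (h : IsGTPattern a b k N) (d : ℤ) (r : ℕ) : 0 ≤ N d r := by
  rcases Nat.eq_zero_or_pos r with rfl | hr
  · rw [h.row_zero]
    positivity
  · rw [← h.eq_zero_of_nonpos (min d 0) r (min_le_right _ _) hr]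
    exact h.monotone r (min_le_left _ _)

lemma le (h : IsGTPattern a b k N) (d : ℤ) (r : ℕ) : N d r ≤ b := by
  rcases le_or_gt r a with hr | hr
  · rw [← h.eq_of_le (max d k) r (le_max_right _ _) hr]
    exact h.monotone r (le_max_left _ _)
  · rw [h.eq_zero_of_row_gt d r hr]
    positivity

lemma eq_zero_of_lt_row (h : IsGTPattern a b k N) :
    ∀ (r : ℕ) (d : ℤ), 1 ≤ r → d < r → N d r = 0
  | 1, d, _, hd => h.eq_zero_of_nonpos d 1 (by push_cast at hd; omega) le_rfl
  | r + 2, d, _, hd => by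
    have interlace := h.interlace (d - 1) (r + 1)
    rw [h.eq_zero_of_lt_row (r + 1) (d - 1) (by omega) (by push_cast at hd ⊢; omega),
      sub_add_cancel] at interlace
    exact le_antisymm interlace (h.nonneg _ _)

lemma eq_of_add_le (h : IsGTPattern a b k N) :
    ∀ (n r : ℕ) (d : ℤ), r + n = a → (k : ℤ) ≤ d + n → N d r = b
  | 0, r, d, hr, hd => h.eq_of_le d r (by simpa using hd) hr.le
  | n + 1, r, d, hr, hd => by
    have interlace := h.interlace d r
    rw [h.eq_of_add_le n (r + 1) (d + 1) (by omega) (by push_cast at hd; omega)] at interlace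
    exact le_antisymm (h.le _ _) interlace

lemma rows_le (h : IsGTPattern a b k N) (hb : 0 < b) : a ≤ k := by
  by_contra! hlt
  have zero := h.eq_zero_of_lt_row a k (by omega) (by omega)
  have full := h.eq_of_le k a le_rfl le_rfl
  omega

protected lemma max_le (h : IsGTPattern a b k N) (j : ℤ) (r : ℕ) :
    max (N (j + 1) (r + 1)) (N (j - 1) r) ≤ N j r := by
  have ge_below := h.le_succ (j - 1) r
  rw [sub_add_cancel] at ge_below
  exact max_le (h.interlace j r) ge_below

protected lemma le_min (h : IsGTPattern a b k N) (j : ℤ) (r : ℕ) :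
    N j (r + 1) ≤ min (N (j + 1) (r + 1)) (N (j - 1) r) := by
  have le_previous := h.interlace (j - 1) r
  rw [sub_add_cancel] at le_previous
  exact le_min (h.le_succ j (r + 1)) le_previous

lemma toggle_row_zero (h : IsGTPattern a b k N) (j : ℤ) : toggle j N j 0 = b := by
  have le_width := h.le (j + 1) 1
  rw [toggle_self, zero_add, Nat.zero_sub, h.row_zero, h.row_zero, h.row_zero]
  omega

lemma max_le_toggle (h : IsGTPattern a b k N) (j : ℤ) :
    ∀ r, max (N (j + 1) (r + 1)) (N (j - 1) r) ≤ toggle j N j r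
  | 0 => by
    rw [h.toggle_row_zero]
    exact max_le (h.le _ _) (h.le _ _)
  | r + 1 => by
    have := h.le_min j r
    rw [toggle_self, Nat.add_sub_cancel]
    omega

lemma toggle_le_min (h : IsGTPattern a b k N) (j : ℤ) (r : ℕ) :
    toggle j N j (r + 1) ≤ min (N (j + 1) (r + 1)) (N (j - 1) r) := by
  have := h.max_le j (r + 1)
  rw [toggle_self, Nat.add_sub_cancel]
  omega

lemma toggle_le_succ (h : IsGTPattern a b k N) (j d : ℤ) (r : ℕ) :
    toggle j N d r ≤ toggle j N (d + 1) r := by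
  by_cases hd : d = j
  · subst hd
    rw [toggle_of_ne (by omega : d + 1 ≠ d)]
    cases r with
    | zero => rw [h.toggle_row_zero, h.row_zero]
    | succ r => exact (h.toggle_le_min d r).trans (min_le_left _ _)
  rw [toggle_of_ne hd]
  by_cases hd' : d + 1 = j
  · subst hd'
    have := (le_max_right _ _).trans (h.max_le_toggle (d + 1) r)
    rwa [add_sub_cancel_right] at this
  · rw [toggle_of_ne hd']
    exact h.le_succ d r

lemma toggle_interlace (h : IsGTPattern a b k N) (j d : ℤ) (r : ℕ) :
    toggle j N (d + 1) (r + 1) ≤ toggle j N d r := by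
  by_cases hd : d = j
  · subst hd
    rw [toggle_of_ne (by omega : d + 1 ≠ d)]
    exact (le_max_left _ _).trans (h.max_le_toggle d r)
  rw [toggle_of_ne hd]
  by_cases hd' : d + 1 = j
  · subst hd'
    have := (h.toggle_le_min (d + 1) r).trans (min_le_right _ _)
    rwa [add_sub_cancel_right] at this
  · rw [toggle_of_ne hd']
    exact h.interlace d r

protected lemma toggle (h : IsGTPattern a b k N) (hj : 1 ≤ j) (hjk : j + 1 ≤ k) :
    IsGTPattern a b k (toggle j N) where
  row_zero d := by
    by_cases hd : d = j
    · subst hd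
      exact h.toggle_row_zero d
    · rw [toggle_of_ne hd, h.row_zero]
  eq_zero_of_row_gt d r hr := by
    by_cases hd : d = j
    · subst hd
      have := h.nonneg (d - 1) (r - 1)
      rw [toggle_self, h.eq_zero_of_row_gt _ r hr, h.eq_zero_of_row_gt _ r hr,
        h.eq_zero_of_row_gt _ r hr, h.eq_zero_of_row_gt _ (r + 1) (by omega)]
      omega
    · rw [toggle_of_ne hd, h.eq_zero_of_row_gt d r hr]
  le_succ := h.toggle_le_succ j
  interlace := h.toggle_interlace j
  eq_zero_of_nonpos d r hd hr := by
    rw [toggle_of_ne (by omega), h.eq_zero_of_nonpos d r hd hr]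
  eq_of_le d r hd hr := by
    rw [toggle_of_ne (by omega), h.eq_of_le d r hd hr]

end IsGTPattern

/-- The composition of the toggles of rows `1, …, n`, in this order. For `n = k - 1` it is promotion
of patterns of tableaux with entries in `[1, k]`. -/
def sweep (n : ℕ) (N : ℤ → ℕ → ℤ) : ℤ → ℕ → ℤ :=
  (List.range n).foldl (fun S (i : ℕ) => toggle ((i : ℤ) + 1) S) N

lemma sweep_succ (n : ℕ) (N : ℤ → ℕ → ℤ) : sweep (n + 1) N = toggle ((n : ℤ) + 1) (sweep n N) := by
  rw [sweep, List.range_succ, List.foldl_append]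
  rfl

lemma sweep_injective : ∀ n, Function.Injective (sweep n)
  | 0 => Function.injective_id
  | n + 1 => by
    have : sweep (n + 1) = toggle ((n : ℤ) + 1) ∘ sweep n := funext (sweep_succ n)
    rw [this]
    exact (Function.Involutive.injective (toggle_toggle _)).comp (sweep_injective n)

protected lemma IsGTPattern.sweep (h : IsGTPattern a b k N) :
    ∀ n, n ≤ k - 1 → IsGTPattern a b k (sweep n N)
  | 0, _ => h
  | n + 1, hn => by
    rw [sweep_succ]
    exact (h.sweep n (by omega)).toggle (by omega) (by omega)

lemma sweep_apply_of_lt : ∀ n : ℕ, (n : ℤ) < d → sweep n N d = N d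
  | 0, _ => rfl
  | n + 1, hd => by
    push_cast at hd
    rw [sweep_succ, toggle_of_ne (by omega), sweep_apply_of_lt n (by omega)]

lemma sweep_apply_eq {n : ℕ} (hd : d ≤ n) {m : ℕ} (hnm : n ≤ m) : sweep m N d = sweep n N d := by
  induction m, hnm using Nat.le_induction with
  | base => rfl
  | succ m hnm ih => rw [sweep_succ, toggle_of_ne (by omega), ih]

lemma sweep_add_self (N : ℤ → ℕ → ℤ) (hd : 1 ≤ d) (hdk : d + 1 ≤ k) (r : ℕ) :
    sweep (k - 1) N d r + N d r =
      max (N (d + 1) (r + 1)) (sweep (k - 1) N (d - 1) r)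
        + min (sweep (k - 1) N (d - 1) (r - 1)) (N (d + 1) r) := by
  obtain ⟨n, rfl⟩ : ∃ n : ℕ, d = (n : ℤ) + 1 := ⟨(d - 1).toNat, by omega⟩
  have row_self : sweep (k - 1) N (n + 1) = sweep (n + 1) N (n + 1) :=
    sweep_apply_eq (by push_cast; rfl) (by omega)
  have row_below : sweep (k - 1) N (n + 1 - 1) = sweep n N (n + 1 - 1) :=
    sweep_apply_eq (by omega) (by omega)
  have row_above : sweep n N (n + 1 + 1) = N (n + 1 + 1) := sweep_apply_of_lt n (by omega)
  have row_untouched : sweep n N (n + 1) = N (n + 1) := sweep_apply_of_lt n (by omega)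
  rw [row_self, row_below, sweep_succ, toggle_self, row_above, row_untouched, min_comm]
  ring

/-- The promotion orbit of `N` read along diagonals, as an orbit of tropical rowmotion on the
rectangle `[1, a] × [1, q]`, where `k = a + q`. -/
def diagonalLabel (a q : ℕ) (N : ℤ → ℕ → ℤ) (l u v : ℕ) : ℤ :=
  (sweep (a + q - 1))^[l + q - v] N (a - u + v) (a + 1 - u)

namespace IsGTPattern

lemma iterate_sweep (h : IsGTPattern a b k N) (i : ℕ) :
    IsGTPattern a b k ((sweep (k - 1))^[i] N) := by
  induction i with
  | zero => exact h
  | succ i ih =>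
    rw [Function.iterate_succ_apply']
    exact ih.sweep (k - 1) le_rfl

variable {q : ℕ}

lemma isTropicalLabeling_diagonalLabel (h : IsGTPattern a b (a + q) N) (l : ℕ) :
    IsTropicalLabeling a q b (diagonalLabel a q N l) where
  nonneg _ _ := (h.iterate_sweep _).nonneg _ _
  le _ _ := (h.iterate_sweep _).le _ _
  zero_left _ := (h.iterate_sweep _).eq_zero_of_row_gt _ _ (by omega)
  zero_right u hu := (h.iterate_sweep _).eq_zero_of_lt_row _ _ (by omega) (by push_cast; omega)
  top_left v := by
    rw [diagonalLabel, Nat.sub_self, (h.iterate_sweep _).row_zero]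
  top_right u hu := by
    rcases le_or_gt u (a + 1) with hua | hua
    · exact (h.iterate_sweep _).eq_of_add_le (u - 1) _ _ (by omega) (by push_cast; omega)
    · rw [diagonalLabel, show a + 1 - u = 0 by omega, (h.iterate_sweep _).row_zero]

end IsGTPattern

lemma isTropicalRowmotion_diagonalLabel (a q : ℕ) (N : ℤ → ℕ → ℤ) (l : ℕ) :
    IsTropicalRowmotion a q (diagonalLabel a q N l) (diagonalLabel a q N (l + 1)) := by
  rintro u v ⟨hu, hua, hv, hvq⟩
  have relation := sweep_add_self (k := a + q) ((sweep (a + q - 1))^[l + q - v] N)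
    (d := a - u + v) (by omega) (by push_cast; omega) (a + 1 - u)
  rw [← Function.iterate_succ_apply' (sweep (a + q - 1))] at relation
  unfold diagonalLabel
  rw [show l + 1 + q - v = l + q - v + 1 by omega, show l + q - (v - 1) = l + q - v + 1 by omega,
    show l + 1 + q - (v + 1) = l + q - v by omega, show a + 1 - (u - 1) = a + 1 - u + 1 by omega,
    show a + 1 - (u + 1) = a + 1 - u - 1 by omega,
    show (a : ℤ) - (u - 1 : ℕ) + v = a - u + v + 1 by omega,
    show (a : ℤ) - u + (v - 1 : ℕ) = a - u + v - 1 by omega,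
    show (a : ℤ) - (u + 1 : ℕ) + v = a - u + v - 1 by omega,
    show (a : ℤ) - u + (v + 1 : ℕ) = a - u + v + 1 by omega]
  exact relation

namespace IsGTPattern

lemma sweep_reciprocity_of_le (h : IsGTPattern a b k N) (hb : 0 < b) {i d r : ℕ} (hi : k ≤ i)
    (hd : d ≤ k) (hr : 1 ≤ r) (hra : r ≤ a) :
    (sweep (k - 1))^[i] N d r
      + (sweep (k - 1))^[i + d] N (k - d) (a + 1 - r) = b := by
  obtain ⟨q, rfl⟩ := Nat.exists_eq_add_of_le (h.rows_le hb)
  by_cases hdr : d < r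
  · rw [(h.iterate_sweep i).eq_zero_of_lt_row r d hr (by omega),
      (h.iterate_sweep (i + d)).eq_of_add_le (r - 1) _ _ (by omega) (by omega), zero_add]
  by_cases hqr : q + r ≤ d
  · rw [(h.iterate_sweep i).eq_of_add_le (a - r) r d (by omega) (by omega),
      (h.iterate_sweep (i + d)).eq_zero_of_lt_row _ _ (by omega) (by omega), add_zero]
  obtain ⟨c, rfl⟩ := Nat.exists_eq_add_of_le (not_lt.1 hdr)
  have reciprocity := tropical_reciprocity h.isTropicalLabeling_diagonalLabel
    (isTropicalRowmotion_diagonalLabel a q N) (l := i + c + 1 - q) (m := i + r)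
    (u := a + 1 - r) (v := c + 1) (u' := r) (v' := q - c)
    ⟨by omega, by omega, by omega, by omega⟩ (by omega) (by omega) (by omega)
  unfold diagonalLabel at reciprocity
  rw [show i + c + 1 - q + q - (c + 1) = i by omega, show a + 1 - (a + 1 - r) = r by omega,
    show i + r + q - (q - c) = i + (r + c) by omega,
    show (a : ℤ) - (a + 1 - r : ℕ) + (c + 1 : ℕ) = (r + c : ℕ) by omega,
    show (a : ℤ) - r + (q - c : ℕ) = (a + q : ℕ) - (r + c : ℕ) by omega] at reciprocity
  rw [add_comm, reciprocity]

lemma iterate_sweep_order (h : IsGTPattern a b k N) (hb : 0 < b) :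
    (sweep (k - 1))^[k] N = N := by
  refine (sweep_injective (k - 1)).iterate k ?_
  rw [← Function.iterate_add_apply]
  funext d r
  have pattern := h.iterate_sweep k
  have pattern' := h.iterate_sweep (k + k)
  by_cases hr : 1 ≤ r ∧ r ≤ a
  swap
  · rcases Nat.eq_zero_or_pos r with rfl | hr0
    · rw [pattern.row_zero, pattern'.row_zero]
    · rw [pattern.eq_zero_of_row_gt d r (by omega), pattern'.eq_zero_of_row_gt d r (by omega)]
  rcases le_or_gt d 0 with hd0 | hd0
  · rw [pattern.eq_zero_of_nonpos d r hd0 hr.1, pattern'.eq_zero_of_nonpos d r hd0 hr.1]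
  rcases le_or_gt (k : ℤ) d with hdk | hdk
  · rw [pattern.eq_of_le d r hdk hr.2, pattern'.eq_of_le d r hdk hr.2]
  lift d to ℕ using hd0.le
  have forward := h.sweep_reciprocity_of_le hb (le_refl k) (d := d) (by omega) hr.1 hr.2
  have back := h.sweep_reciprocity_of_le hb (i := k + d) (d := k - d) (r := a + 1 - r) (by omega)
    (by omega) (by omega) (by omega)
  rw [show a + 1 - (a + 1 - r) = r by omega, show k + d + (k - d) = k + k by omega,
    Nat.cast_sub (by omega), sub_sub_cancel] at back
  omega

theorem sweep_reciprocity (h : IsGTPattern a b k N) (hb : 0 < b) (i : ℕ) {d r : ℕ} (hd : d ≤ k)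
    (hr : 1 ≤ r) (hra : r ≤ a) :
    (sweep (k - 1))^[i] N d r
      + (sweep (k - 1))^[i + d] N (k - d) (a + 1 - r) = b := by
  have reciprocity := h.sweep_reciprocity_of_le hb (i := i + k) (by omega) hd hr hra
  rwa [add_right_comm, Function.iterate_add_apply, Function.iterate_add_apply _ (i + d),
    h.iterate_sweep_order hb] at reciprocity

end IsGTPattern

end GelfandTsetlin

section Tableau

/-- The pattern `N` encodes the filling `T` if the entries at most `d` in each row of `T` fill
precisely the first `N d r` boxes, where `r` is the number of the row counted from `1`. -/
def Encodes {a b : ℕ} (N : ℤ → ℕ → ℤ) (T : Fin a → Fin b → ℤ) : Prop :=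
  ∀ (x : Fin a) (y : Fin b) (d : ℤ), T x y ≤ d ↔ (y : ℤ) < N d (x + 1)

variable {a b k : ℕ} {N : ℤ → ℕ → ℤ} {T T' : Fin a → Fin b → ℤ}

lemma card_filter_le_lt {p s : ℤ} (hp : 0 ≤ p) (hps : p ≤ s) (hs : s ≤ b) :
    ((Finset.univ.filter fun y : Fin b => p ≤ (y : ℤ) ∧ (y : ℤ) < s).card : ℤ) = s - p := by
  lift p to ℕ using hp
  lift s to ℕ using by omega
  have image : (Finset.univ.filter fun y : Fin b => (p : ℤ) ≤ (y : ℤ) ∧ (y : ℤ) < s).map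
      Fin.valEmbedding = Finset.Ico p s := by
    ext n
    simp only [Finset.mem_map, Finset.mem_filter, Finset.mem_univ, true_and, Fin.valEmbedding_apply,
      Finset.mem_Ico, Nat.cast_le, Nat.cast_lt]
    exact ⟨fun ⟨_, hy, hyn⟩ => hyn ▸ hy, fun hn => ⟨⟨n, by omega⟩, hn, rfl⟩⟩
  rw [← Finset.card_map Fin.valEmbedding, image, Nat.card_Ico]
  omega

namespace Encodes

lemma unique (hT : Encodes N T) (hT' : Encodes N T') : T = T' := by
  funext x y
  exact eq_of_forall_ge_iff fun d => (hT x y d).trans (hT' x y d).symm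

lemma free_low_iff (hT : Encodes N T) (h : IsGTPattern a b k N) (j : ℤ) (x : Fin a) (y : Fin b) :
    (T x y = j ∧ ∀ hx : (x : ℕ) + 1 < a, T ⟨x + 1, hx⟩ y ≠ j + 1) ↔
      max (N (j + 1) (x + 1 + 1)) (N (j - 1) (x + 1)) ≤ y ∧ (y : ℤ) < N j (x + 1) := by
  have entry_le := hT x y j
  have entry_lt := hT x y (j - 1)
  have interlace := h.interlace (j - 1) (x + 1)
  rw [sub_add_cancel] at interlace
  by_cases hx : (x : ℕ) + 1 < a
  · have below_le := hT ⟨x + 1, hx⟩ y (j + 1)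
    have below_lt := hT ⟨x + 1, hx⟩ y j
    simp only [hx, forall_true_left] at *
    omega
  · have no_row_below := h.eq_zero_of_row_gt (j + 1) (x + 1 + 1) (by omega)
    simp only [hx, IsEmpty.forall_iff, and_true]
    omega

lemma free_high_iff (hT : Encodes N T) (h : IsGTPattern a b k N) (j : ℤ) (x : Fin a) (y : Fin b) :
    (T x y = j + 1 ∧ ∀ x' : Fin a, (x' : ℕ) + 1 = x → T x' y ≠ j) ↔
      N j (x + 1) ≤ y ∧ (y : ℤ) < min (N (j + 1) (x + 1)) (N (j - 1) x) := by
  have entry_le := hT x y (j + 1)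
  have entry_lt := hT x y j
  obtain ⟨_ | n, hn⟩ := x
  · have row_zero := h.row_zero (j - 1)
    simp only [Nat.add_eq_zero_iff, one_ne_zero, and_false, false_imp_iff, implies_true, and_true]
      at *
    omega
  · have above_le := hT ⟨n, by omega⟩ y j
    have above_lt := hT ⟨n, by omega⟩ y (j - 1)
    have interlace := h.interlace j (n + 1)
    have only_above : (∀ x' : Fin a, (x' : ℕ) + 1 = n + 1 → T x' y ≠ j) ↔
        T ⟨n, by omega⟩ y ≠ j :=
      ⟨fun hne => hne _ rfl, fun hne x' hx' => by
        rwa [show x' = ⟨n, by omega⟩ from Fin.ext (Nat.succ.inj hx')]⟩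
    simp only [only_above] at *
    omega

lemma bk_apply (hT : Encodes N T) (h : IsGTPattern a b k N) (j : ℤ) (x : Fin a) (y : Fin b) :
    bk a b j T x y =
      if max (N (j + 1) (x + 1 + 1)) (N (j - 1) (x + 1)) ≤ y ∧
          (y : ℤ) < min (N (j + 1) (x + 1)) (N (j - 1) x) then
        if (y : ℤ) < toggle j N j (x + 1) then j else j + 1
      else T x y := by
  have max_le := h.max_le j (x + 1)
  have le_min := h.le_min j x
  have nonneg := h.nonneg (j - 1) (x + 1)
  have le_width := h.le (j + 1) (x + 1)
  rw [toggle_self, Nat.add_sub_cancel]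
  simp only [bk, hT.free_low_iff h, hT.free_high_iff h]
  set lower := max (N (j + 1) (x + 1 + 1)) (N (j - 1) (x + 1))
  set upper := min (N (j + 1) (x + 1)) (N (j - 1) x)
  have free_iff (z : Fin b) : (lower ≤ z ∧ (z : ℤ) < N j (x + 1) ∨
      N j (x + 1) ≤ z ∧ (z : ℤ) < upper) ↔ lower ≤ z ∧ (z : ℤ) < upper := by omega
  simp only [free_iff]
  refine if_ctx_congr Iff.rfl (fun hfree => ?_) fun _ => rfl
  have rank_iff (z : Fin b) : ((lower ≤ z ∧ (z : ℤ) < upper) ∧ z ≤ y) ↔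
      lower ≤ z ∧ (z : ℤ) < (y : ℤ) + 1 := by
    rw [Fin.le_def]
    omega
  simp only [rank_iff]
  have rank := card_filter_le_lt (b := b) (p := lower) (s := y + 1) (by omega) (by omega) (by omega)
  have free_high := card_filter_le_lt (b := b) (p := N j (x + 1)) (s := upper) (by omega)
    (by omega) (by omega)
  exact if_congr (by omega) rfl rfl

protected lemma bk (hT : Encodes N T) (h : IsGTPattern a b k N) (j : ℤ) :
    Encodes (toggle j N) (bk a b j T) := by
  intro x y d
  have le_iff := hT x y d
  have le_pred_iff := hT x y (j - 1)
  have le_succ_iff := hT x y (j + 1)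
  have max_le := h.max_le j (x + 1)
  have le_min := h.le_min j x
  have max_le_toggle := h.max_le_toggle j (x + 1)
  have toggle_le_min := h.toggle_le_min j x
  rw [hT.bk_apply h]
  by_cases hd : d = j
  · subst hd
    split_ifs <;> omega
  · rw [toggle_of_ne hd, ← le_iff]
    split_ifs <;> omega

lemma foldl_bk (hT : Encodes N T) (h : IsGTPattern a b k N) :
    ∀ n, n ≤ k - 1 → Encodes (sweep n N)
      ((List.range n).foldl (fun S (i : ℕ) => bk a b ((i : ℤ) + 1) S) T)
  | 0, _ => hT
  | n + 1, hn => by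
    rw [sweep_succ, List.range_succ, List.foldl_append]
    exact (hT.foldl_bk h n (by omega)).bk (h.sweep n (by omega)) _

protected lemma pro (hT : Encodes N T) (h : IsGTPattern a b k N) :
    Encodes (sweep (k - 1) N) (pro a b k T) := by
  have := hT.foldl_bk h (k - 1) le_rfl
  simpa [pro, List.foldl_map, List.foldl_flatMap] using this

lemma iterate_pro (hT : Encodes N T) (h : IsGTPattern a b k N) (i : ℕ) :
    Encodes ((sweep (k - 1))^[i] N) ((pro a b k)^[i] T) := by
  induction i with
  | zero => exact hT
  | succ i ih =>
    rw [Function.iterate_succ_apply', Function.iterate_succ_apply']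
    exact ih.pro (h.iterate_sweep i)

lemma mem_Icc (hT : Encodes N T) (h : IsGTPattern a b k N) (x : Fin a) (y : Fin b) :
    T x y ∈ Set.Icc 1 (k : ℤ) := by
  have not_le_zero := hT x y 0
  have le_top := hT x y k
  rw [h.eq_zero_of_nonpos 0 _ le_rfl (by omega)] at not_le_zero
  rw [h.eq_of_le k _ le_rfl (by omega)] at le_top
  rw [Set.mem_Icc]
  omega

end Encodes

/-- The Gelfand–Tsetlin pattern of the filling `T`. -/
noncomputable def gtPattern (T : Fin a → Fin b → ℤ) (d : ℤ) : ℕ → ℤ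
  | 0 => b
  | r + 1 => if hr : r < a then (Finset.univ.filter fun y => T ⟨r, hr⟩ y ≤ d).card else 0

lemma gtPattern_succ (T : Fin a → Fin b → ℤ) (d : ℤ) (x : Fin a) :
    gtPattern T d (x + 1) = (Finset.univ.filter fun y => T x y ≤ d).card :=
  dif_pos x.2

lemma gtPattern_eq_zero (T : Fin a → Fin b → ℤ) (d : ℤ) :
    ∀ {r : ℕ}, a < r → gtPattern T d r = 0
  | _ + 1, hr => dif_neg (by omega)

lemma gtPattern_nonneg (T : Fin a → Fin b → ℤ) (d : ℤ) : ∀ r, 0 ≤ gtPattern T d r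
  | 0 => Int.natCast_nonneg b
  | r + 1 => by
    rw [gtPattern]
    split_ifs <;> positivity

lemma gtPattern_le (T : Fin a → Fin b → ℤ) (d : ℤ) : ∀ r, gtPattern T d r ≤ b
  | 0 => le_rfl
  | r + 1 => by
    rw [gtPattern]
    split_ifs
    · exact_mod_cast card_finset_fin_le _
    · positivity

lemma gtPattern_le_succ (T : Fin a → Fin b → ℤ) (d : ℤ) (r : ℕ) :
    gtPattern T d r ≤ gtPattern T (d + 1) r := by
  obtain _ | r := r
  · exact le_rfl
  rcases lt_or_ge r a with hr | hr
  · rw [gtPattern_succ T d ⟨r, hr⟩, gtPattern_succ T (d + 1) ⟨r, hr⟩, Nat.cast_le]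
    exact Finset.card_le_card (Finset.monotone_filter_right _ fun y _ hy => by omega)
  · rw [gtPattern_eq_zero T d (by omega)]
    exact gtPattern_nonneg T _ _

lemma gtPattern_interlace (hT : IsSSYT a b k T) (d : ℤ) (r : ℕ) :
    gtPattern T (d + 1) (r + 1) ≤ gtPattern T d r := by
  rcases lt_or_ge r a with hr | hr
  · obtain _ | r := r
    · exact gtPattern_le T _ _
    rw [gtPattern_succ T (d + 1) ⟨r + 1, hr⟩, gtPattern_succ T d ⟨r, by omega⟩, Nat.cast_le]
    refine Finset.card_le_card (Finset.monotone_filter_right _ fun y _ hy => ?_)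
    have column_strict := hT.2.2 y ⟨r, by omega⟩ ⟨r + 1, hr⟩ (Fin.mk_lt_mk.2 (Nat.lt_succ_self r))
    omega
  · rw [gtPattern_eq_zero T _ (by omega)]
    exact gtPattern_nonneg T _ _

lemma isGTPattern_gtPattern (hT : IsSSYT a b k T) : IsGTPattern a b k (gtPattern T) where
  row_zero _ := rfl
  eq_zero_of_row_gt d _ hr := gtPattern_eq_zero T d hr
  le_succ := gtPattern_le_succ T
  interlace := gtPattern_interlace hT
  eq_zero_of_nonpos d r hd hr := by
    obtain ⟨r, rfl⟩ := Nat.exists_eq_add_of_le' hr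
    rcases lt_or_ge r a with hra | hra
    · rw [gtPattern_succ T d ⟨r, hra⟩, Finset.filter_false_of_mem, Finset.card_empty, Nat.cast_zero]
      intro y _
      have := (hT.1 ⟨r, hra⟩ y).1
      omega
    · exact gtPattern_eq_zero T d (by omega)
  eq_of_le d r hd hr := by
    obtain _ | r := r
    · rfl
    rw [gtPattern_succ T d ⟨r, hr⟩, Finset.filter_true_of_mem, Finset.card_univ, Fintype.card_fin]
    exact fun y _ => (hT.1 ⟨r, hr⟩ y).2.trans hd

lemma encodes_gtPattern (hT : ∀ x, Monotone (T x)) : Encodes (gtPattern T) T := by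
  intro x y d
  rw [gtPattern_succ, Nat.cast_lt]
  constructor
  · intro hle
    have initial : Finset.Iic y ⊆ Finset.univ.filter fun z => T x z ≤ d := fun z hz =>
      Finset.mem_filter.2 ⟨Finset.mem_univ z, (hT x (Finset.mem_Iic.1 hz)).trans hle⟩
    simpa only [Fin.card_Iic, Nat.succ_le_iff] using Finset.card_le_card initial
  · contrapose!
    intro hlt
    have initial : (Finset.univ.filter fun z => T x z ≤ d) ⊆ Finset.Iio y := fun z hz =>
      Finset.mem_Iio.2 <| lt_of_not_ge fun hyz =>
        hlt.not_ge ((hT x hyz).trans (Finset.mem_filter.1 hz).2)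
    simpa only [Fin.card_Iio] using Finset.card_le_card initial

lemma encodes_iterate_pro (hT : IsSSYT a b k T) (i : ℕ) :
    Encodes ((sweep (k - 1))^[i] (gtPattern T)) ((pro a b k)^[i] T) :=
  (encodes_gtPattern hT.2.1).iterate_pro (isGTPattern_gtPattern hT) i

theorem iterate_pro_order (hT : IsSSYT a b k T) : (pro a b k)^[k] T = T := by
  rcases Nat.eq_zero_or_pos b with rfl | hb
  · exact Subsingleton.elim _ _
  have encodes := encodes_iterate_pro hT k
  rw [(isGTPattern_gtPattern hT).iterate_sweep_order hb] at encodes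
  exact encodes.unique (encodes_gtPattern hT.2.1)

lemma iterate_pro_mem_Icc (hT : IsSSYT a b k T) (i : ℕ) (x : Fin a) (y : Fin b) :
    (pro a b k)^[i] T x y ∈ Set.Icc 1 (k : ℤ) :=
  (encodes_iterate_pro hT i).mem_Icc ((isGTPattern_gtPattern hT).iterate_sweep i) x y

theorem iterate_pro_le_iff (hT : IsSSYT a b k T) (i : ℕ) (d : ℤ) (x : Fin a) (y : Fin b) :
    (pro a b k)^[i] T x y ≤ d ↔ k + 1 - (pro a b k)^[i + d.toNat] T x.rev y.rev ≤ d := by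
  have range := iterate_pro_mem_Icc hT i x y
  have range_rev := iterate_pro_mem_Icc hT (i + d.toNat) x.rev y.rev
  rw [Set.mem_Icc] at range range_rev
  by_cases hd : 0 ≤ d ∧ d ≤ k
  · obtain ⟨hd0, hdk⟩ := hd
    lift d to ℕ using hd0
    rw [Int.toNat_natCast]
    have reciprocity := (isGTPattern_gtPattern hT).sweep_reciprocity y.pos i (d := d) (r := x + 1)
      (by omega) (by omega) (by omega)
    have le_iff := encodes_iterate_pro hT i x y d
    have rev_le_iff := encodes_iterate_pro hT (i + d) x.rev y.rev (k - d)
    rw [show (x.rev : ℕ) + 1 = a + 1 - (x + 1) by rw [Fin.val_rev]; omega, Fin.val_rev]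
      at rev_le_iff
    omega
  · omega

end Tableau

section Distribution

lemma map_range_add_of_periodic {α : Type*} {f : ℕ → α} {k : ℕ} (hf : Function.Periodic f k)
    (s : ℕ) : ((Multiset.range k).map fun i => f (i + s)) = (Multiset.range k).map f := by
  induction s with
  | zero => rfl
  | succ s ih =>
    rw [← ih, ← Multiset.cons_inj_right (f (0 + s))]
    calc f (0 + s) ::ₘ (Multiset.range k).map (fun i => f (i + (s + 1)))
        = (Multiset.range (k + 1)).map fun i => f (i + s) := by
          simp [Multiset.range, List.range_succ_eq_map, Function.comp_def, add_assoc, add_comm 1]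
      _ = f (0 + s) ::ₘ (Multiset.range k).map fun i => f (i + s) := by
          rw [Multiset.range_succ, Multiset.map_cons, zero_add, add_comm k, hf]

lemma count_add_countP_le_pred (s : Multiset ℤ) (d : ℤ) :
    s.count d + s.countP (· ≤ d - 1) = s.countP (· ≤ d) := by
  induction s using Multiset.induction with
  | empty => rfl
  | cons m s ih =>
    rw [Multiset.count_cons, Multiset.countP_cons, Multiset.countP_cons]
    split_ifs <;> omega

lemma multiset_eq_of_countP_le {s t : Multiset ℤ}
    (h : ∀ d, s.countP (· ≤ d) = t.countP (· ≤ d)) : s = t := by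
  ext d
  have count_s := count_add_countP_le_pred s d
  have count_t := count_add_countP_le_pred t d
  rw [h, h] at count_s
  omega

end Distribution

end RectanglePromotion

/-- for `T ∈ SSYT_k(a × b)`, a box `B = (x,y)`, and the box
`B* = (a+1−x, b+1−y)` obtained from `B` by 180° rotation of the rectangle,
`SSYTDist(T,B) = {k+1−m : m ∈ SSYTDist(T,B*)}`. -/
theorem ssyt_dist_antipodal (a b k : ℕ) (ha : 0 < a) (hb : 0 < b) (hk : 0 < k)
    (T : Fin a → Fin b → ℤ) (hT : IsSSYT a b k T) (x : Fin a) (y : Fin b) :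
    SSYTDist a b k T x y =
      (SSYTDist a b k T x.rev y.rev).map (fun m => (k : ℤ) + 1 - m) := by
  let complement (i : ℕ) : ℤ := k + 1 - (pro a b k)^[i] T x.rev y.rev
  have periodic : Function.Periodic complement k := fun i => by
    simp only [complement, Function.iterate_add_apply, RectanglePromotion.iterate_pro_order hT]
  refine RectanglePromotion.multiset_eq_of_countP_le fun d => ?_
  calc (SSYTDist a b k T x y).countP (· ≤ d)
      = ((Multiset.range k).map fun i => complement (i + d.toNat)).countP (· ≤ d) := by
        rw [SSYTDist, Multiset.countP_map, Multiset.countP_map]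
        exact congrArg _ <| Multiset.filter_congr fun i _ =>
          RectanglePromotion.iterate_pro_le_iff hT i d x y
    _ = ((Multiset.range k).map complement).countP (· ≤ d) := by
        rw [RectanglePromotion.map_range_add_of_periodic periodic]
    _ = ((SSYTDist a b k T x.rev y.rev).map fun m => (k : ℤ) + 1 - m).countP (· ≤ d) := by
        rw [SSYTDist, Multiset.map_map]
        rfl
end

section
/- Let T ∈ SSYT_k(a × b), let x be a row index (1 ≤ x ≤ a), and let d ∈ ℤ. Then the multiset BCDist(T, a+1−x, k−d) equals {b − m : m ∈ BCDist(T, x, d)}, where BCDist(T, x, d) is the multiset, over 0 ≤ i ≤ k−1, of the number of boxes in row x of Pro^i(T) whose entry exceeds d. -/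
open scoped Classical

/-- `#B(T,x,d)`: the number of boxes in row `x` of `T` whose entry exceeds `d`. -/
noncomputable def bcount (a b : ℕ) (T : Fin a → Fin b → ℤ) (x : Fin a) (d : ℤ) : ℕ :=
  (Finset.univ.filter (fun y : Fin b => d < T x y)).card

/-- `BCDist(T,x,d)`: the multiset, over `0 ≤ i ≤ k−1`, of the number of boxes in row `x`
of `Pro^i(T)` whose entry exceeds `d`. -/
noncomputable def BCDist (a b k : ℕ) (T : Fin a → Fin b → ℤ) (x : Fin a) (d : ℤ) :
    Multiset ℤ :=
  (Multiset.range k).map (fun i => (bcount a b ((pro a b k)^[i] T) x d : ℤ))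

/-!
Recording, for every `d`, how many entries of each row are at most `d` turns a tableau into a
Gelfand–Tsetlin pattern and the Bender–Knuth involution `ρ_j` into the piecewise-linear toggle of
its `j`-th row. In sheared coordinates promotion is therefore piecewise-linear rowmotion on the
`a × (k - a)` rectangle, and the theorem becomes the reciprocity of rowmotion: the label of box
`(r, c)` after `r + c - 1` steps is the reflection of the initial label of the antipodal box. This
gives the antipodal symmetry of the pattern up to a time shift and the period `k`, so the shift
disappears on passing to the multiset of values over a full period.

Piecewise-linear reciprocity is the tropical limit of its birational analogue. For the latter, each
labeling has a transfer matrix, a product of bidiagonal matrices, and the matrices `M l` of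
successive labelings satisfy `M (l + 1) * S = S * M l` for the shift `S`. Letting them act on the
first and last columns of labels proves reciprocity for the first column, and the toggle relation
propagates it from column to column.
-/

section Bidiagonal

open Matrix

variable {R : Type*} [CommRing R] {p : ℕ}

/-- The nilpotent `p × p` matrix `S` with ones on the subdiagonal: it moves the entries of a column
vector one place down. -/
def lowerShift (R : Type*) [CommRing R] (p : ℕ) : Matrix (Fin p) (Fin p) R :=
  Matrix.of fun i j => if (i : ℕ) = j + 1 then 1 else 0

/-- The lower bidiagonal matrix with diagonal `D 0, …, D (p - 1)` and `-1` on the subdiagonal. The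
diagonal is a function on `ℕ` so that it can be shifted. -/
def bidiag (p : ℕ) (D : ℕ → R) : Matrix (Fin p) (Fin p) R :=
  diagonal (fun i : Fin p => D i) - lowerShift R p

/-- The ordered product `bidiag (D 0) * ⋯ * bidiag (D (n - 1))`. -/
def bidiagProd (p : ℕ) (D : ℕ → ℕ → R) (n : ℕ) : Matrix (Fin p) (Fin p) R :=
  ((List.range n).map fun c => bidiag p (D c)).prod

lemma lowerShift_mulVec (v : ℕ → R) :
    (lowerShift R p *ᵥ fun j => v (j + 1)) = fun i : Fin p => if (i : ℕ) = 0 then 0 else v i := by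
  ext i
  simp only [mulVec, dotProduct, lowerShift, of_apply, ite_mul, one_mul, zero_mul]
  split_ifs with hi
  · simp [hi]
  · have below (j : Fin p) : (i : ℕ) = j + 1 ↔ j = ⟨i - 1, by omega⟩ := by
      rw [Fin.ext_iff]; dsimp only; omega
    simp only [below, Finset.sum_ite_eq', Finset.mem_univ, if_true]
    congr 1
    omega

lemma vecMul_lowerShift (v : ℕ → R) :
    (fun i : Fin p => v i) ᵥ* lowerShift R p =
      fun j : Fin p => if (j : ℕ) + 1 = p then 0 else v (j + 1) := by
  ext j
  simp only [vecMul, dotProduct, lowerShift, of_apply, mul_ite, mul_one, mul_zero]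
  split_ifs with hj
  · exact Finset.sum_eq_zero fun i _ => if_neg (by omega)
  · have above (i : Fin p) : (i : ℕ) = j + 1 ↔ i = ⟨j + 1, by omega⟩ := by rw [Fin.ext_iff]
    simp only [above, Finset.sum_ite_eq', Finset.mem_univ, if_true]

lemma diagonal_mul_lowerShift (D : ℕ → R) :
    diagonal (fun i : Fin p => D i) * lowerShift R p =
      lowerShift R p * diagonal fun i : Fin p => D (i + 1) := by
  ext i j
  rw [diagonal_mul, mul_diagonal, lowerShift, of_apply]
  split_ifs with h
  · rw [h, mul_comm]
  · rw [mul_zero, zero_mul]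

lemma lowerShift_mul_diagonal_congr {D E : ℕ → R} (h : ∀ i, i + 1 < p → D i = E i) :
    lowerShift R p * diagonal (fun i : Fin p => D i) =
      lowerShift R p * diagonal fun i : Fin p => E i := by
  ext i j
  rw [mul_diagonal, mul_diagonal, lowerShift, of_apply]
  split_ifs with hij
  · rw [h j (hij ▸ i.isLt)]
  · rw [zero_mul, zero_mul]

lemma bidiag_congr {D E : ℕ → R} (h : ∀ i < p, D i = E i) : bidiag p D = bidiag p E := by
  simp only [bidiag, h _ (Fin.isLt _)]

lemma bidiagProd_congr {D E : ℕ → ℕ → R} {n : ℕ} (h : ∀ c < n, ∀ i < p, D c i = E c i) :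
    bidiagProd p D n = bidiagProd p E n :=
  congrArg List.prod <| List.map_congr_left fun c hc => bidiag_congr (h c (List.mem_range.1 hc))

lemma bidiagProd_succ (D : ℕ → ℕ → R) (n : ℕ) :
    bidiagProd p D (n + 1) = bidiagProd p D n * bidiag p (D n) :=
  List.prod_range_succ _ n

lemma bidiag_mul_lowerShift (D : ℕ → R) :
    bidiag p D * lowerShift R p = lowerShift R p * bidiag p fun i => D (i + 1) := by
  rw [bidiag, bidiag, sub_mul, mul_sub, diagonal_mul_lowerShift]

lemma bidiagProd_mul_lowerShift (D : ℕ → ℕ → R) (n : ℕ) :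
    bidiagProd p D n * lowerShift R p =
      lowerShift R p * bidiagProd p (fun c i => D c (i + 1)) n := by
  induction n with
  | zero => simp [bidiagProd]
  | succ n ih =>
    rw [bidiagProd_succ, bidiagProd_succ, mul_assoc, bidiag_mul_lowerShift, ← mul_assoc, ih,
      mul_assoc]

lemma bidiag_mul_bidiag (D E : ℕ → R) :
    bidiag p D * bidiag p E =
      diagonal (fun i : Fin p => D i * E i)
        - lowerShift R p * diagonal (fun i : Fin p => D (i + 1) + E i)
        + lowerShift R p * lowerShift R p := by
  rw [← diagonal_add, mul_add, ← diagonal_mul_lowerShift, ← diagonal_mul_diagonal, bidiag, bidiag]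
  noncomm_ring

lemma bidiag_mul_bidiag_mul_lowerShift_congr {D E D' E' : ℕ → R}
    (hmul : ∀ i, i + 1 < p → D (i + 1) * E (i + 1) = D' (i + 1) * E' (i + 1))
    (hadd : ∀ i, i + 1 < p → D (i + 2) + E (i + 1) = D' (i + 2) + E' (i + 1)) :
    bidiag p D * (bidiag p E * lowerShift R p) = bidiag p D' * (bidiag p E' * lowerShift R p) := by
  have expand (D E : ℕ → R) : bidiag p D * (bidiag p E * lowerShift R p) =
      lowerShift R p * diagonal (fun i : Fin p => D (i + 1) * E (i + 1))
        - lowerShift R p * (lowerShift R p * diagonal fun i : Fin p => D (i + 2) + E (i + 1))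
        + lowerShift R p * (lowerShift R p * lowerShift R p) := by
    rw [bidiag_mul_lowerShift, ← mul_assoc, bidiag_mul_lowerShift, mul_assoc, bidiag_mul_bidiag,
      mul_add, mul_sub]
  rw [expand, expand, lowerShift_mul_diagonal_congr (D := fun i => D (i + 1) * E (i + 1)) hmul,
    lowerShift_mul_diagonal_congr (D := fun i => D (i + 2) + E (i + 1)) hadd]

end Bidiagonal

section Rowmotion

open Matrix

variable {K : Type*} [Field K] {p q : ℕ} {β : K}

/-- `u` is a labeling of the boxes `(r, c)`, `1 ≤ r ≤ p`, `1 ≤ c ≤ q`, of a rectangle by nonzero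
scalars, and `w` is its reciprocal. Birational rowmotion adjoins a minimum with label `1` and a
maximum with label `β`; these are placed at `(0, 1)` and `(p + 1, q)`. The other boxes around the
rectangle contribute nothing to sums of `u` below it, or of `w` above it. -/
structure IsReciprocalLabeling (p q : ℕ) (β : K) (u w : ℕ → ℕ → K) : Prop where
  mul_eq_one : ∀ {r c}, r < p → c < q → u (r + 1) (c + 1) * w (r + 1) (c + 1) = 1
  u_row_zero : ∀ c, u 0 c = if c = 1 then 1 else 0
  u_col_zero : ∀ r, u r 0 = 0
  w_row_top : ∀ c, w (p + 1) c = if c = q then β⁻¹ else 0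
  w_col_top : ∀ r, w r (q + 1) = 0

/-- `u 0, u 1, …` is an orbit of birational rowmotion on the `p × q` rectangle: the label of each
box is toggled, from the top of the rectangle to the bottom. -/
structure IsRowmotionOrbit (p q : ℕ) (β : K) (u w : ℕ → ℕ → ℕ → K) : Prop where
  labeling : ∀ l, IsReciprocalLabeling p q β (u l) (w l)
  toggle : ∀ l {r c}, r < p → c < q →
    u (l + 1) (r + 1) (c + 1) * u l (r + 1) (c + 1) *
        (w (l + 1) (r + 2) (c + 1) + w (l + 1) (r + 1) (c + 2)) =
      u l r (c + 1) + u l (r + 1) c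

/-- The ratio of the sum of the labels below box `(i + 1, c + 1)` to the label of the box. -/
def downWeight (u w : ℕ → ℕ → K) (c i : ℕ) : K := (u i (c + 1) + u (i + 1) c) * w (i + 1) (c + 1)

/-- The label of box `(i, c + 1)` times the sum of the reciprocal labels above it. -/
def upWeight (u w : ℕ → ℕ → K) (c i : ℕ) : K := u i (c + 1) * (w (i + 1) (c + 1) + w i (c + 2))

/-- The term that `downWeight u w c i` and `upWeight u w c i` have in common. -/
def verticalWeight (u w : ℕ → ℕ → K) (c i : ℕ) : K := u i (c + 1) * w (i + 1) (c + 1)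

/-- The product over the columns of the bidiagonal matrices of up-weights. Rowmotion conjugates it
by the shift, in the sense of `IsRowmotionOrbit.transferMatrix_mul_lowerShift`. -/
def transferMatrix (p q : ℕ) (u w : ℕ → ℕ → K) : Matrix (Fin p) (Fin p) K :=
  bidiagProd p (fun c i => upWeight u w c (i + 1)) q

namespace IsReciprocalLabeling

variable {u w : ℕ → ℕ → K}

lemma bidiag_verticalWeight_mul_downWeight (h : IsReciprocalLabeling p q β u w) {c : ℕ}
    (hc : c + 1 < q) :
    bidiag p (verticalWeight u w c) * (bidiag p (downWeight u w (c + 1)) * lowerShift K p) =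
      bidiag p (upWeight u w c) * (bidiag p (verticalWeight u w (c + 1)) * lowerShift K p) := by
  apply bidiag_mul_bidiag_mul_lowerShift_congr
  · intro i hi
    have left := h.mul_eq_one hi (show c < q by omega)
    have right := h.mul_eq_one (show i < p by omega) hc
    simp only [verticalWeight, downWeight, upWeight]
    linear_combination (u (i + 1) (c + 1) * w (i + 2) (c + 2)) * (left - right)
  · intro i _
    simp only [verticalWeight, downWeight, upWeight]
    ring

lemma bidiagProd_downWeight_succ_mul_lowerShift (h : IsReciprocalLabeling p q β u w) {n : ℕ}
    (hn : n < q) :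
    bidiagProd p (downWeight u w) (n + 1) * lowerShift K p =
      bidiagProd p (upWeight u w) n * (bidiag p (verticalWeight u w n) * lowerShift K p) := by
  induction n with
  | zero =>
    have first_column : bidiag p (downWeight u w 0) = bidiag p (verticalWeight u w 0) :=
      bidiag_congr fun i _ => by simp only [downWeight, verticalWeight, h.u_col_zero, add_zero]
    simp [bidiagProd, first_column]
  | succ n ih =>
    calc bidiagProd p (downWeight u w) (n + 2) * lowerShift K p
      _ = bidiagProd p (downWeight u w) (n + 1) * lowerShift K p *
            bidiag p (fun i => downWeight u w (n + 1) (i + 1)) := by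
        rw [bidiagProd_succ, mul_assoc, bidiag_mul_lowerShift, mul_assoc]
      _ = bidiagProd p (upWeight u w) n * (bidiag p (verticalWeight u w n) *
            (bidiag p (downWeight u w (n + 1)) * lowerShift K p)) := by
        rw [ih (by omega), bidiag_mul_lowerShift (downWeight u w (n + 1))]
        simp only [mul_assoc]
      _ = bidiagProd p (upWeight u w) (n + 1) *
            (bidiag p (verticalWeight u w (n + 1)) * lowerShift K p) := by
        rw [h.bidiag_verticalWeight_mul_downWeight hn, bidiagProd_succ, mul_assoc]

lemma bidiagProd_downWeight_mul_lowerShift (h : IsReciprocalLabeling p q β u w) :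
    bidiagProd p (downWeight u w) q * lowerShift K p = lowerShift K p * transferMatrix p q u w := by
  rw [transferMatrix, ← bidiagProd_mul_lowerShift]
  obtain _ | n := q
  · simp [bidiagProd]
  have last_column : bidiag p (verticalWeight u w n) = bidiag p (upWeight u w n) :=
    bidiag_congr fun i _ => by simp only [upWeight, verticalWeight, h.w_col_top, add_zero]
  rw [h.bidiagProd_downWeight_succ_mul_lowerShift n.lt_succ_self, last_column, ← mul_assoc,
    ← bidiagProd_succ]

lemma bidiag_downWeight_mulVec (h : IsReciprocalLabeling p q β u w) {c : ℕ} (hc : c < q) :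
    (bidiag p (downWeight u w c) *ᵥ fun i => u (i + 1) (c + 1)) =
      fun i : Fin p => u (i + 1) c + if (i : ℕ) = 0 then u 0 (c + 1) else 0 := by
  rw [bidiag, sub_mulVec, lowerShift_mulVec fun r => u r (c + 1)]
  ext i
  have inv := h.mul_eq_one i.isLt hc
  simp only [Pi.sub_apply, mulVec_diagonal, downWeight]
  split_ifs with hi
  · rw [hi] at inv ⊢
    linear_combination (u 0 (c + 1) + u 1 c) * inv
  · linear_combination (u i (c + 1) + u (i + 1) c) * inv

lemma bidiagProd_downWeight_mulVec (h : IsReciprocalLabeling p q β u w) {n : ℕ} (hn : n < q) :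
    (bidiagProd p (downWeight u w) (n + 1) *ᵥ fun i => u (i + 1) (n + 1)) =
      fun i : Fin p => if (i : ℕ) = 0 then 1 else 0 := by
  induction n with
  | zero =>
    rw [bidiagProd_succ, ← mulVec_mulVec, h.bidiag_downWeight_mulVec hn]
    simp [bidiagProd, h.u_col_zero, h.u_row_zero]
  | succ n ih =>
    rw [bidiagProd_succ, ← mulVec_mulVec, h.bidiag_downWeight_mulVec hn, ← ih (by omega)]
    simp [h.u_row_zero]

lemma vecMul_bidiag_upWeight (h : IsReciprocalLabeling p q β u w) {c : ℕ} (hc : c < q) :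
    (fun i : Fin p => w (i + 1) (c + 1)) ᵥ* bidiag p (fun i => upWeight u w c (i + 1)) =
      fun j : Fin p => w (j + 1) (c + 2) + if (j : ℕ) + 1 = p then w (p + 1) (c + 1) else 0 := by
  rw [bidiag, vecMul_sub, vecMul_lowerShift fun r => w (r + 1) (c + 1)]
  ext j
  have inv := h.mul_eq_one j.isLt hc
  simp only [Pi.sub_apply, vecMul_diagonal, upWeight]
  split_ifs with hj
  · have top : w (p + 1) (c + 1) = w (j + 1 + 1) (c + 1) := by rw [hj]
    rw [top]
    linear_combination (w (j + 1 + 1) (c + 1) + w (j + 1) (c + 2)) * inv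
  · linear_combination (w (j + 1 + 1) (c + 1) + w (j + 1) (c + 2)) * inv

lemma vecMul_bidiagProd_upWeight (h : IsReciprocalLabeling p q β u w) {n : ℕ} (hn : n < q) :
    (fun i : Fin p => w (i + 1) 1) ᵥ* bidiagProd p (fun c i => upWeight u w c (i + 1)) (n + 1) =
      fun j : Fin p => w (j + 1) (n + 2) + if (j : ℕ) + 1 = p then w (p + 1) (n + 1) else 0 := by
  induction n with
  | zero => simpa [bidiagProd] using h.vecMul_bidiag_upWeight hn
  | succ n ih =>
    rw [bidiagProd_succ, ← vecMul_vecMul, ih (by omega), ← h.vecMul_bidiag_upWeight hn]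
    simp [h.w_row_top, show n + 1 ≠ q by omega]

lemma vecMul_transferMatrix (h : IsReciprocalLabeling p q β u w) (hq : 0 < q) :
    (fun i : Fin p => w (i + 1) 1) ᵥ* transferMatrix p q u w =
      fun j : Fin p => if (j : ℕ) + 1 = p then β⁻¹ else 0 := by
  obtain _ | n := q
  · omega
  rw [transferMatrix, h.vecMul_bidiagProd_upWeight n.lt_succ_self]
  simp [h.w_col_top, h.w_row_top]

end IsReciprocalLabeling

namespace IsRowmotionOrbit

variable {u w : ℕ → ℕ → ℕ → K}

lemma transferMatrix_succ (h : IsRowmotionOrbit p q β u w) (l : ℕ) :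
    transferMatrix p q (u (l + 1)) (w (l + 1)) = bidiagProd p (downWeight (u l) (w l)) q :=
  bidiagProd_congr fun c hc i hi => by
    have inv := (h.labeling l).mul_eq_one hi hc
    simp only [upWeight, downWeight, ← h.toggle l hi hc]
    linear_combination (-u (l + 1) (i + 1) (c + 1) *
      (w (l + 1) (i + 2) (c + 1) + w (l + 1) (i + 1) (c + 2))) * inv

lemma transferMatrix_mul_lowerShift (h : IsRowmotionOrbit p q β u w) (l : ℕ) :
    transferMatrix p q (u (l + 1)) (w (l + 1)) * lowerShift K p =
      lowerShift K p * transferMatrix p q (u l) (w l) := by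
  rw [h.transferMatrix_succ, (h.labeling l).bidiagProd_downWeight_mul_lowerShift]

lemma transferMatrix_mulVec (h : IsRowmotionOrbit p q β u w) (hq : 0 < q) (l m : ℕ) :
    (transferMatrix p q (u (l + 1 + m)) (w (l + 1 + m)) *ᵥ
        fun i => if m < (i : ℕ) + 1 then u l (i + 1 - m) q else 0) =
      fun i : Fin p => if (i : ℕ) = m then 1 else 0 := by
  induction m with
  | zero =>
    obtain _ | n := q
    · omega
    simpa [h.transferMatrix_succ] using
      (h.labeling l).bidiagProd_downWeight_mulVec n.lt_succ_self
  | succ m ih =>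
    have shift_label : (fun i : Fin p => if m + 1 < (i : ℕ) + 1 then u l (i + 1 - (m + 1)) q else 0)
        = lowerShift K p *ᵥ fun i => if m < (i : ℕ) + 1 then u l (i + 1 - m) q else 0 := by
      rw [lowerShift_mulVec fun r => if m < r then u l (r - m) q else 0]
      ext i
      split_ifs <;> first | rfl | omega | simp
    have shift_unit : (lowerShift K p *ᵥ fun i => if (i : ℕ) = m then 1 else 0)
        = fun i : Fin p => if (i : ℕ) = m + 1 then 1 else 0 := by
      have shifted := lowerShift_mulVec (R := K) (p := p) fun r => if r = m + 1 then 1 else 0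
      simp only [Nat.add_right_cancel_iff] at shifted
      rw [shifted]
      ext i
      split_ifs <;> first | rfl | omega
    rw [shift_label, mulVec_mulVec, ← add_assoc, h.transferMatrix_mul_lowerShift, ← mulVec_mulVec,
      ih, shift_unit]

lemma w_first_column (h : IsRowmotionOrbit p q β u w) (hq : 0 < q) (l : ℕ) {m : ℕ} (hm : m < p) :
    w (l + 1 + m) (m + 1) 1 = β⁻¹ * u l (p - m) q := by
  set M := transferMatrix p q (u (l + 1 + m)) (w (l + 1 + m))
  set label : Fin p → K := fun i => if m < (i : ℕ) + 1 then u l (i + 1 - m) q else 0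
  have unit_eq (n : ℕ) (hn : n < p) (i : Fin p) : (i : ℕ) = n ↔ i = ⟨n, hn⟩ := by rw [Fin.ext_iff]
  calc w (l + 1 + m) (m + 1) 1
    _ = (fun i : Fin p => w (l + 1 + m) (i + 1) 1) ⬝ᵥ fun i => if (i : ℕ) = m then 1 else 0 := by
      simp [dotProduct, unit_eq m hm]
    _ = ((fun i : Fin p => w (l + 1 + m) (i + 1) 1) ᵥ* M) ⬝ᵥ label := by
      rw [← h.transferMatrix_mulVec hq l m, dotProduct_mulVec]
    _ = (fun j : Fin p => if (j : ℕ) = p - 1 then β⁻¹ else 0) ⬝ᵥ label := by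
      have last (j : Fin p) : (j : ℕ) + 1 = p ↔ (j : ℕ) = p - 1 := by omega
      simp only [M, (h.labeling _).vecMul_transferMatrix hq, last]
    _ = β⁻¹ * u l (p - m) q := by
      simp only [dotProduct, unit_eq (p - 1) (by omega), ite_mul, zero_mul, Finset.sum_ite_eq',
        Finset.mem_univ, if_true, label]
      rw [if_pos (by omega), Nat.sub_add_cancel (by omega)]

end IsRowmotionOrbit

end Rowmotion

section Reciprocity

variable {K : Type*} [Field K] {p q : ℕ} {β : K} {u w : ℕ → ℕ → ℕ → K}

/-- Reciprocity for the boxes of column `c`: the label of `(r, c)` at time `s + r + c - 1` is `β`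
times the reciprocal of the label at time `s` of the antipodal box `(p + 1 - r, q + 1 - c)`. -/
def IsReciprocalColumn (p q : ℕ) (β : K) (u w : ℕ → ℕ → ℕ → K) (c : ℕ) : Prop :=
  ∀ {l s r r' c'}, l + 1 = s + r + c → r + r' = p → c + c' = q →
    u l r c = β * w s (r' + 1) (c' + 1)

lemma eq_mul_inverse_iff {x x' y y' : K} (hx : x * y = 1) (hx' : x' * y' = 1) :
    x = β * y' ↔ y = β⁻¹ * x' := by
  obtain rfl := eq_inv_of_mul_eq_one_right hx
  obtain rfl := eq_inv_of_mul_eq_one_right hx'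
  rw [← inv_inj, mul_inv, inv_inv]

namespace IsRowmotionOrbit

lemma u_row_zero_eq (h : IsRowmotionOrbit p q β u w) (hβ : β ≠ 0) (l s : ℕ) {c c' : ℕ}
    (hc : c + c' = q) : u l 0 c = β * w s (p + 1) (c' + 1) := by
  rw [(h.labeling l).u_row_zero, (h.labeling s).w_row_top]
  obtain rfl | hc1 := eq_or_ne c 1
  · rw [if_pos rfl, if_pos (by omega), mul_inv_cancel₀ hβ]
  · rw [if_neg hc1, if_neg (by omega), mul_zero]

lemma w_eq (h : IsRowmotionOrbit p q β u w) (hβ : β ≠ 0) {c : ℕ}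
    (col : IsReciprocalColumn p q β u w (c + 1)) {l s r r' c' : ℕ} (hl : l = s + r + (c + 1))
    (hr : r + r' = p) (hc : c + c' + 1 = q) : w l (r + 1) (c + 1) = β⁻¹ * u s r' (c' + 1) := by
  obtain _ | r' := r'
  · obtain rfl : r = p := hr
    rw [h.u_row_zero_eq hβ s l (c' := c) (by omega), inv_mul_cancel_left₀ hβ]
  · exact (eq_mul_inverse_iff ((h.labeling l).mul_eq_one (by omega) (by omega))
      ((h.labeling s).mul_eq_one (by omega) (by omega))).1 (col (by omega) (by omega) (by omega))

lemma isReciprocalColumn_succ (h : IsRowmotionOrbit p q β u w) (hβ : β ≠ 0) {c : ℕ}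
    (hw : ∀ {s r r' c'}, r + r' + 1 = p → c + c' + 1 = q →
      w (s + r + (c + 1)) (r + 1) (c + 1) = β⁻¹ * u s (r' + 1) (c' + 1)) :
    IsReciprocalColumn p q β u w (c + 1) := by
  intro l s r r' c' hl hr hc
  obtain _ | r := r
  · rw [h.u_row_zero_eq hβ l s hc, ← hr, zero_add]
  obtain rfl : l = s + r + (c + 1) := by omega
  exact (eq_mul_inverse_iff ((h.labeling _).mul_eq_one (by omega) (by omega))
    ((h.labeling s).mul_eq_one (by omega) (by omega))).2 (hw (by omega) (by omega))

lemma isReciprocalColumn_zero (h : IsRowmotionOrbit p q β u w) :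
    IsReciprocalColumn p q β u w 0 := by
  intro l s r r' c' _ _ hc
  rw [(h.labeling l).u_col_zero, show c' = q by omega, (h.labeling s).w_col_top, mul_zero]

lemma isReciprocalColumn_one (h : IsRowmotionOrbit p q β u w) (hβ : β ≠ 0) :
    IsReciprocalColumn p q β u w 1 :=
  h.isReciprocalColumn_succ hβ fun {s r r' c'} hr hc => by
    rw [show s + r + (0 + 1) = s + 1 + r by omega, h.w_first_column (by omega) s (by omega)]
    congr 2 <;> omega

lemma isReciprocalColumn_add_two (h : IsRowmotionOrbit p q β u w) (hβ : β ≠ 0) {c : ℕ}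
    (below : IsReciprocalColumn p q β u w c) (col : IsReciprocalColumn p q β u w (c + 1)) :
    IsReciprocalColumn p q β u w (c + 2) :=
  h.isReciprocalColumn_succ hβ fun {s r r' c'} hr hc => by
    set t := s + r + (c + 1)
    have toggle := h.toggle t (r := r) (c := c) (by omega) (by omega)
    have antipodal_toggle := h.toggle s (r := r') (c := c' + 1) (by omega) (by omega)
    have inv := (h.labeling s).mul_eq_one (r := r') (c := c' + 1) (by omega) (by omega)
    have inv_succ := (h.labeling (s + 1)).mul_eq_one (r := r') (c := c' + 1) (by omega) (by omega)
    rw [col (l := t + 1) (s := s + 1) (r' := r') (c' := c' + 1) (by omega) (by omega) (by omega),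
      col (l := t) (s := s) (r' := r') (c' := c' + 1) (by omega) (by omega) (by omega),
      col (l := t) (s := s + 1) (r' := r' + 1) (c' := c' + 1) (by omega) (by omega) (by omega),
      below (l := t) (s := s + 1) (r' := r') (c' := c' + 2) (by omega) (by omega) (by omega),
      h.w_eq hβ col (s := s) (r' := r') (c' := c' + 1) (by omega) (by omega) (by omega)] at toggle
    have reduced : w s (r' + 1) (c' + 2) * w (s + 1) (r' + 1) (c' + 2) *
        (u s r' (c' + 2) + β * w (t + 1) (r + 1) (c + 2)) =
          w (s + 1) (r' + 2) (c' + 2) + w (s + 1) (r' + 1) (c' + 3) := by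
      apply mul_left_cancel₀ hβ
      rw [mul_add β]
      refine Eq.trans ?_ toggle
      field_simp
    rw [eq_inv_mul_iff_mul_eq₀ hβ]
    change β * w (t + 1) (r + 1) (c + 2) = u s (r' + 1) (c' + 1)
    rw [← reduced] at antipodal_toggle
    set x := u s r' (c' + 2) + β * w (t + 1) (r + 1) (c + 2) with hx
    linear_combination antipodal_toggle - hx - x * inv_succ - x * w (s + 1) (r' + 1) (c' + 2) *
      u (s + 1) (r' + 1) (c' + 2) * inv

theorem isReciprocalColumn (h : IsRowmotionOrbit p q β u w) (hβ : β ≠ 0) (c : ℕ) :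
    IsReciprocalColumn p q β u w c := by
  induction c using Nat.twoStepInduction with
  | zero => exact h.isReciprocalColumn_zero
  | one => exact h.isReciprocalColumn_one hβ
  | more c below col => exact h.isReciprocalColumn_add_two hβ below col

end IsRowmotionOrbit

end Reciprocity

section ExpRate

open Filter Asymptotics

/-- The sequence `f` is positive and grows like `exp (n * F)` up to constant factors. On such
sequences, products and sums act on the rates as `+` and `max`: this is tropicalization. -/
structure HasExpRate (f : ℕ → ℝ) (F : ℝ) : Prop where
  pos : ∀ n, 0 < f n
  isTheta : f =Θ[atTop] fun n : ℕ => Real.exp (n * F)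

namespace HasExpRate

variable {f g : ℕ → ℝ} {F G : ℝ}

lemma exp (F : ℝ) : HasExpRate (fun n => Real.exp (n * F)) F :=
  ⟨fun _ => Real.exp_pos _, isTheta_refl _ _⟩

lemma one : HasExpRate (fun _ => 1) 0 := by
  simpa using HasExpRate.exp 0

lemma mul (hf : HasExpRate f F) (hg : HasExpRate g G) :
    HasExpRate (fun n => f n * g n) (F + G) where
  pos n := mul_pos (hf.pos n) (hg.pos n)
  isTheta := by simpa only [mul_add, Real.exp_add] using hf.isTheta.mul hg.isTheta

lemma inv (hf : HasExpRate f F) : HasExpRate (fun n => (f n)⁻¹) (-F) where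
  pos n := inv_pos.2 (hf.pos n)
  isTheta := by simpa only [mul_neg, Real.exp_neg] using hf.isTheta.inv

lemma add_of_le (hf : HasExpRate f F) (hg : HasExpRate g G) (hFG : F ≤ G) :
    HasExpRate (fun n => f n + g n) G where
  pos n := add_pos (hf.pos n) (hg.pos n)
  isTheta := by
    have exp_le : (fun n : ℕ => Real.exp (n * F)) =O[atTop] fun n : ℕ => Real.exp (n * G) :=
      IsBigO.of_norm_le fun n => by
        rw [Real.norm_of_nonneg (Real.exp_pos _).le]
        gcongr
    have le_add : g =O[atTop] fun n => f n + g n :=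
      IsBigO.of_norm_le fun n => by
        rw [Real.norm_of_nonneg (hg.pos n).le]
        exact le_add_of_nonneg_left (hf.pos n).le
    exact ⟨(hf.isTheta.1.trans exp_le).add hg.isTheta.1, hg.isTheta.2.trans le_add⟩

lemma add (hf : HasExpRate f F) (hg : HasExpRate g G) :
    HasExpRate (fun n => f n + g n) (max F G) := by
  obtain hFG | hGF := le_total F G
  · simpa only [max_eq_right hFG] using hf.add_of_le hg hFG
  · simpa only [max_eq_left hGF, add_comm] using hg.add_of_le hf hGF

lemma unique (hF : HasExpRate f F) (hG : HasExpRate f G) : F = G := by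
  have bounded := Real.isTheta_exp_comp_exp_comp.1 (hF.isTheta.symm.trans hG.isTheta)
  by_contra hne
  have unbounded : Tendsto (fun n : ℕ => |(n : ℝ) * F - n * G|) atTop atTop := by
    simp only [← mul_sub, abs_mul, Nat.abs_cast]
    exact tendsto_natCast_atTop_atTop.atTop_mul_const (abs_pos.2 (sub_ne_zero.2 hne))
  exact not_isBoundedUnder_of_tendsto_atTop unbounded bounded

end HasExpRate

end ExpRate

section Tropicalization

/-- A labeling of the rectangle `1 ≤ r ≤ p`, `1 ≤ c ≤ q` by elements of `[0, b]`, extended by `0`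
below the rectangle and by `b` above it. -/
structure IsPLLabeling (p q : ℕ) (b : ℝ) (U : ℕ → ℕ → ℝ) : Prop where
  mem_Icc : ∀ {r c}, r < p → c < q → U (r + 1) (c + 1) ∈ Set.Icc 0 b
  row_zero : ∀ {c}, c < q → U 0 (c + 1) = 0
  col_zero : ∀ {r}, r < p → U (r + 1) 0 = 0
  row_top : ∀ {c}, c < q → U (p + 1) (c + 1) = b
  col_top : ∀ {r}, r < p → U (r + 1) (q + 1) = b

/-- `V` is the image of `U` under piecewise-linear rowmotion, the tropicalization of birational
rowmotion. -/
def IsPLRowmotion (p q : ℕ) (U V : ℕ → ℕ → ℝ) : Prop :=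
  ∀ {r c}, r < p → c < q →
    V (r + 1) (c + 1) + U (r + 1) (c + 1) =
      max (U r (c + 1)) (U (r + 1) c) + min (V (r + 2) (c + 1)) (V (r + 1) (c + 2))

section Construction

variable {K : Type*} [Field K]

/-- The labeling with reciprocal `w`, extended below the rectangle as in `IsReciprocalLabeling`. -/
def labelOfRecip (w : ℕ → ℕ → K) (r c : ℕ) : K :=
  if r = 0 then if c = 1 then 1 else 0 else if c = 0 then 0 else (w r c)⁻¹

/-- The reciprocal labeling `w`, extended above the rectangle as in `IsReciprocalLabeling`. -/
def extendRecip (p q : ℕ) (β : K) (w : ℕ → ℕ → K) (r c : ℕ) : K :=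
  if p < r then if c = q then β⁻¹ else 0 else if q < c then 0 else w r c

/-- The reciprocal of the image of the labeling `u` under birational rowmotion. -/
def rowmotionRecip (p q : ℕ) (β : K) (u : ℕ → ℕ → K) (r c : ℕ) : K :=
  if p < r then if c = q then β⁻¹ else 0 else if q < c then 0 else
    u r c * (rowmotionRecip p q β u (r + 1) c + rowmotionRecip p q β u r (c + 1)) *
      (u (r - 1) c + u r (c - 1))⁻¹
termination_by (p + 1 - r) + (q + 1 - c)

/-- The reciprocals of the labelings in the orbit of birational rowmotion that starts at the
labeling with reciprocal `w`. -/
def recipOrbit (p q : ℕ) (β : K) (w : ℕ → ℕ → K) : ℕ → ℕ → ℕ → K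
  | 0 => extendRecip p q β w
  | l + 1 => rowmotionRecip p q β (labelOfRecip (recipOrbit p q β w l))

variable {p q : ℕ} {β : K}

lemma labelOfRecip_succ_succ (w : ℕ → ℕ → K) (r c : ℕ) :
    labelOfRecip w (r + 1) (c + 1) = (w (r + 1) (c + 1))⁻¹ := by
  simp [labelOfRecip]

lemma extendRecip_succ_succ (w : ℕ → ℕ → K) {r c : ℕ} (hr : r < p) (hc : c < q) :
    extendRecip p q β w (r + 1) (c + 1) = w (r + 1) (c + 1) := by
  rw [extendRecip, if_neg (by omega), if_neg (by omega)]

lemma rowmotionRecip_row_top (u : ℕ → ℕ → K) (c : ℕ) :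
    rowmotionRecip p q β u (p + 1) c = if c = q then β⁻¹ else 0 := by
  rw [rowmotionRecip, if_pos p.lt_succ_self]

lemma rowmotionRecip_col_top (u : ℕ → ℕ → K) (r : ℕ) :
    rowmotionRecip p q β u r (q + 1) = 0 := by
  rw [rowmotionRecip]
  split_ifs <;> first | rfl | omega

lemma rowmotionRecip_succ_succ (u : ℕ → ℕ → K) {r c : ℕ} (hr : r < p) (hc : c < q) :
    rowmotionRecip p q β u (r + 1) (c + 1) = u (r + 1) (c + 1) *
      (rowmotionRecip p q β u (r + 2) (c + 1) + rowmotionRecip p q β u (r + 1) (c + 2)) *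
      (u r (c + 1) + u (r + 1) c)⁻¹ := by
  rw [rowmotionRecip, if_neg (by omega), if_neg (by omega)]
  rfl

lemma recipOrbit_row_top (w : ℕ → ℕ → K) (l c : ℕ) :
    recipOrbit p q β w l (p + 1) c = if c = q then β⁻¹ else 0 := by
  cases l with
  | zero => simp [recipOrbit, extendRecip]
  | succ l => exact rowmotionRecip_row_top _ c

lemma recipOrbit_col_top (w : ℕ → ℕ → K) (l r : ℕ) : recipOrbit p q β w l r (q + 1) = 0 := by
  cases l with
  | zero => simp [recipOrbit, extendRecip]
  | succ l => exact rowmotionRecip_col_top _ r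

lemma isReciprocalLabeling_recipOrbit {w : ℕ → ℕ → K} {l : ℕ}
    (hne : ∀ {r c}, r < p → c < q → recipOrbit p q β w l (r + 1) (c + 1) ≠ 0) :
    IsReciprocalLabeling p q β (labelOfRecip (recipOrbit p q β w l)) (recipOrbit p q β w l) where
  mul_eq_one hr hc := by rw [labelOfRecip_succ_succ, inv_mul_cancel₀ (hne hr hc)]
  u_row_zero c := by simp [labelOfRecip]
  u_col_zero r := by simp [labelOfRecip]
  w_row_top := recipOrbit_row_top w l
  w_col_top := recipOrbit_col_top w l

lemma isRowmotionOrbit_recipOrbit {w : ℕ → ℕ → K}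
    (hne : ∀ l {r c}, r < p → c < q → recipOrbit p q β w l (r + 1) (c + 1) ≠ 0) :
    IsRowmotionOrbit p q β (fun l => labelOfRecip (recipOrbit p q β w l))
      (recipOrbit p q β w) where
  labeling l := isReciprocalLabeling_recipOrbit (hne l)
  toggle l r c hr hc := by
    have ne := hne (l + 1) hr hc
    rw [labelOfRecip_succ_succ, recipOrbit, rowmotionRecip_succ_succ _ hr hc] at *
    obtain ⟨⟨label_ne, up_ne⟩, down_ne⟩ := by simpa only [mul_ne_zero_iff] using ne
    rw [ne_eq, inv_eq_zero] at down_ne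
    field_simp

end Construction

/-- The labels with reciprocals `w n` grow with rates `U` as `n → ∞`. -/
def HasLabelRate (p q : ℕ) (w : ℕ → ℕ → ℕ → ℝ) (U : ℕ → ℕ → ℝ) : Prop :=
  ∀ {r c}, r < p → c < q → HasExpRate (fun n => w n (r + 1) (c + 1)) (-U (r + 1) (c + 1))

variable {p q : ℕ} {b : ℝ} {U V : ℕ → ℕ → ℝ} {w : ℕ → ℕ → ℕ → ℝ}

namespace HasLabelRate

lemma label (hw : HasLabelRate p q w U) {r c : ℕ} (hr : r < p) (hc : c < q) :
    HasExpRate (fun n => labelOfRecip (w n) (r + 1) (c + 1)) (U (r + 1) (c + 1)) := by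
  simpa only [labelOfRecip_succ_succ, neg_neg] using (hw hr hc).inv

lemma label_down (hU : IsPLLabeling p q b U) (hw : HasLabelRate p q w U) {r c : ℕ} (hr : r < p)
    (hc : c < q) :
    HasExpRate (fun n => labelOfRecip (w n) r (c + 1) + labelOfRecip (w n) (r + 1) c)
      (max (U r (c + 1)) (U (r + 1) c)) := by
  match r, c with
  | 0, 0 => simpa [labelOfRecip, hU.row_zero hc, hU.col_zero hr] using HasExpRate.one
  | 0, c + 1 =>
    rw [hU.row_zero hc, max_eq_right (hU.mem_Icc hr (by omega)).1]
    simpa [labelOfRecip] using hw.label hr (show c < q by omega)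
  | r + 1, 0 =>
    rw [hU.col_zero hr, max_eq_left (hU.mem_Icc (by omega) hc).1]
    simpa [labelOfRecip] using hw.label (show r < p by omega) hc
  | r + 1, c + 1 => exact (hw.label (by omega) hc).add (hw.label hr (by omega))

end HasLabelRate

lemma hasExpRate_recip_up (hU : IsPLLabeling p q b U)
    (row_top : ∀ n c, w n (p + 1) c = if c = q then (Real.exp (n * b))⁻¹ else 0)
    (col_top : ∀ n r, w n r (q + 1) = 0) {r c : ℕ} (hr : r < p) (hc : c < q)
    (hup : r + 1 < p → HasExpRate (fun n => w n (r + 2) (c + 1)) (-U (r + 2) (c + 1)))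
    (hright : c + 1 < q → HasExpRate (fun n => w n (r + 1) (c + 2)) (-U (r + 1) (c + 2))) :
    HasExpRate (fun n => w n (r + 2) (c + 1) + w n (r + 1) (c + 2))
      (-min (U (r + 2) (c + 1)) (U (r + 1) (c + 2))) := by
  obtain hr | rfl : r + 1 < p ∨ r + 1 = p := by omega
  all_goals obtain hc | rfl : c + 1 < q ∨ c + 1 = q := by omega
  · rw [← max_neg_neg]
    exact (hup hr).add (hright hc)
  · rw [hU.col_top (by omega), min_eq_left (hU.mem_Icc hr hc).2]
    simpa only [col_top, add_zero] using hup hr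
  · rw [hU.row_top (by omega), min_eq_right (hU.mem_Icc (by omega) hc).2]
    simpa only [row_top, hc.ne, if_false, zero_add] using hright hc
  · rw [hU.row_top hc, hU.col_top hr, min_self]
    simpa only [row_top, col_top, if_true, add_zero] using (HasExpRate.exp b).inv

lemma HasLabelRate.rowmotionRecip (hU : IsPLLabeling p q b U) (hV : IsPLLabeling p q b V)
    (hUV : IsPLRowmotion p q U V) (hw : HasLabelRate p q w U) :
    HasLabelRate p q
      (fun n => rowmotionRecip p q (Real.exp (n * b)) (labelOfRecip (w n))) V := by
  intro r c hr hc
  induction hm : (p - r) + (q - c) using Nat.strong_induction_on generalizing r c with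
  | _ m ih =>
    subst hm
    have up := hasExpRate_recip_up hV (fun n => rowmotionRecip_row_top (labelOfRecip (w n)))
      (fun n => rowmotionRecip_col_top (labelOfRecip (w n))) hr hc
      (fun hr' => ih _ (by omega) hr' hc rfl) (fun hc' => ih _ (by omega) hr hc' rfl)
    simp only [rowmotionRecip_succ_succ _ hr hc]
    convert ((hw.label hr hc).mul up).mul (hw.label_down hU hr hc).inv using 1
    linarith [hUV hr hc]

/-- The rowmotion orbit of positive real labels that tropicalizes to `U`. -/
noncomputable def liftedOrbit (p q : ℕ) (b : ℝ) (U : ℕ → ℕ → ℝ) (n : ℕ) : ℕ → ℕ → ℕ → ℝ :=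
  recipOrbit p q (Real.exp (n * b)) fun r c => (Real.exp (n * U r c))⁻¹

lemma hasLabelRate_liftedOrbit {U : ℕ → ℕ → ℕ → ℝ} (hU : ∀ l, IsPLLabeling p q b (U l))
    (hstep : ∀ l, IsPLRowmotion p q (U l) (U (l + 1))) (l : ℕ) :
    HasLabelRate p q (fun n => liftedOrbit p q b (U 0) n l) (U l) := by
  induction l with
  | zero =>
    intro r c hr hc
    simpa only [liftedOrbit, recipOrbit, extendRecip_succ_succ _ hr hc]
      using (HasExpRate.exp (U 0 (r + 1) (c + 1))).inv
  | succ l ih => exact ih.rowmotionRecip (hU l) (hU (l + 1)) (hstep l)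

lemma isRowmotionOrbit_liftedOrbit {U : ℕ → ℕ → ℕ → ℝ} (hU : ∀ l, IsPLLabeling p q b (U l))
    (hstep : ∀ l, IsPLRowmotion p q (U l) (U (l + 1))) (n : ℕ) :
    IsRowmotionOrbit p q (Real.exp (n * b))
      (fun l => labelOfRecip (liftedOrbit p q b (U 0) n l)) (liftedOrbit p q b (U 0) n) :=
  isRowmotionOrbit_recipOrbit fun l _ _ hr hc =>
    ((hasLabelRate_liftedOrbit hU hstep l hr hc).pos n).ne'

theorem plRowmotion_reciprocity {U : ℕ → ℕ → ℕ → ℝ} (hU : ∀ l, IsPLLabeling p q b (U l))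
    (hstep : ∀ l, IsPLRowmotion p q (U l) (U (l + 1))) {l s r r' c c' : ℕ}
    (hl : l = s + r + c + 1) (hr : r + r' + 1 = p) (hc : c + c' + 1 = q) :
    U l (r + 1) (c + 1) + U s (r' + 1) (c' + 1) = b := by
  have rate := hasLabelRate_liftedOrbit hU hstep
  have label_rate := HasLabelRate.label (rate l) (show r < p by omega) (show c < q by omega)
  have antipodal_rate := (HasExpRate.exp b).mul
    (rate s (show r' < p by omega) (show c' < q by omega))
  have reciprocal (n : ℕ) : labelOfRecip (liftedOrbit p q b (U 0) n l) (r + 1) (c + 1) =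
      Real.exp (n * b) * liftedOrbit p q b (U 0) n s (r' + 1) (c' + 1) :=
    (isRowmotionOrbit_liftedOrbit hU hstep n).isReciprocalColumn (Real.exp_ne_zero _) (c + 1)
      (by omega) (by omega) (by omega)
  simp only [reciprocal] at label_rate
  linarith [label_rate.unique antipodal_rate]

end Tropicalization

section Promotion

/-- `C` is the Gelfand–Tsetlin pattern of a tableau in `SSYT_k(a × b)`: `C d x` is the number of
entries at most `d` in row `x`. Rows are numbered from `0` by integers, and there are infinitely
many rows above and below the rectangle, in which `C` is `b` and `0` respectively. -/
structure IsGelfandTsetlin (a b k : ℕ) (C : ℤ → ℤ → ℤ) : Prop where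
  le_succ : ∀ d x, C d x ≤ C (d + 1) x
  interlace : ∀ d x, C (d + 1) (x + 1) ≤ C d x
  eq_zero_of_nonpos : ∀ {d x}, d ≤ 0 → 0 ≤ x → C d x = 0
  eq_of_le : ∀ {d x : ℤ}, k ≤ d → x < a → C d x = b
  eq_of_neg : ∀ {x}, x < 0 → ∀ d, C d x = b
  eq_zero_of_le : ∀ {x}, (a : ℤ) ≤ x → ∀ d, C d x = 0

namespace IsGelfandTsetlin

variable {a b k : ℕ} {C D : ℤ → ℤ → ℤ}

lemma monotone (hC : IsGelfandTsetlin a b k C) (x : ℤ) : Monotone fun d => C d x :=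
  monotone_int_of_le_succ fun d => hC.le_succ d x

lemma nonneg (hC : IsGelfandTsetlin a b k C) (d x : ℤ) : 0 ≤ C d x := by
  obtain hx | hx := lt_or_ge x 0
  · rw [hC.eq_of_neg hx]
    exact b.cast_nonneg
  · calc 0 = C (min d 0) x := (hC.eq_zero_of_nonpos (min_le_right d 0) hx).symm
      _ ≤ C d x := hC.monotone x (min_le_left d 0)

lemma le (hC : IsGelfandTsetlin a b k C) (d x : ℤ) : C d x ≤ b := by
  obtain hx | hx := le_or_gt (a : ℤ) x
  · rw [hC.eq_zero_of_le hx]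
    exact b.cast_nonneg
  · calc C d x ≤ C (max d k) x := hC.monotone x (le_max_left d k)
      _ = b := hC.eq_of_le (le_max_right d k) hx

lemma interlace_add (hC : IsGelfandTsetlin a b k C) (d x : ℤ) (n : ℕ) :
    C (d + n) (x + n) ≤ C d x := by
  induction n with
  | zero => simp
  | succ n ih =>
    push_cast
    rw [← add_assoc, ← add_assoc]
    exact (hC.interlace _ _).trans ih

lemma eq_zero_of_le_row (hC : IsGelfandTsetlin a b k C) {d x : ℤ} (hx : 0 ≤ x) (hd : d ≤ x) :
    C d x = 0 := by
  have bound := hC.interlace_add (d - x) 0 x.toNat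
  rw [Int.toNat_of_nonneg hx, sub_add_cancel, zero_add,
    hC.eq_zero_of_nonpos (sub_nonpos.2 hd) le_rfl] at bound
  exact bound.antisymm (hC.nonneg d x)

lemma eq_of_le_add_row (hC : IsGelfandTsetlin a b k C) {d x : ℤ} (hx : x < a)
    (hd : k ≤ d + (a - 1 - x)) : C d x = b := by
  have bound := hC.interlace_add d x (a - 1 - x).toNat
  rw [Int.toNat_of_nonneg (by omega), hC.eq_of_le hd (by omega)] at bound
  exact (hC.le d x).antisymm bound

lemma eq_of_le_zero_or_le (hC : IsGelfandTsetlin a b k C) (hD : IsGelfandTsetlin a b k D) {d : ℤ}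
    (hd : d ≤ 0 ∨ k ≤ d) (x : ℤ) : C d x = D d x := by
  obtain hx | hx := lt_or_ge x 0
  · rw [hC.eq_of_neg hx, hD.eq_of_neg hx]
  obtain hxa | hxa := le_or_gt (a : ℤ) x
  · rw [hC.eq_zero_of_le hxa, hD.eq_zero_of_le hxa]
  obtain hd | hd := hd
  · rw [hC.eq_zero_of_nonpos hd hx, hD.eq_zero_of_nonpos hd hx]
  · rw [hC.eq_of_le hd hxa, hD.eq_of_le hd hxa]

end IsGelfandTsetlin

/-- The Gelfand–Tsetlin patterns `C 0, C 1, …` form an orbit of promotion: the rows `1, …, k - 1`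
are toggled, in this order. -/
structure IsPromotionOrbit (a b k : ℕ) (C : ℕ → ℤ → ℤ → ℤ) : Prop where
  pattern : ∀ i, IsGelfandTsetlin a b k (C i)
  toggle : ∀ i {d : ℤ}, 1 ≤ d → d < k → ∀ x,
    C (i + 1) d x + C i d x = max (C i (d + 1) (x + 1)) (C (i + 1) (d - 1) x) +
      min (C (i + 1) (d - 1) (x - 1)) (C i (d + 1) x)

/-- Sheared coordinates in which promotion becomes rowmotion on the `a × q` rectangle, where
`k = a + q`. -/
def shearedPattern (a q : ℕ) (C : ℕ → ℤ → ℤ → ℤ) (l r c : ℕ) : ℤ :=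
  C (l + q - c) (c + a - r) (a - r)

lemma shearedPattern_eq {a q l r c i : ℕ} (C : ℕ → ℤ → ℤ → ℤ) {d x : ℤ} (hi : i + c = l + q)
    (hd : d = c + a - r) (hx : x = a - r) : shearedPattern a q C l r c = C i d x := by
  rw [shearedPattern, hd, hx, ← hi, Nat.add_sub_cancel]

namespace IsPromotionOrbit

variable {a b k q : ℕ} {C : ℕ → ℤ → ℤ → ℤ}

lemma isPLLabeling_shearedPattern (hC : IsPromotionOrbit a b (a + q) C) (l : ℕ) :
    IsPLLabeling a q b fun r c => shearedPattern a q C l r c where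
  mem_Icc _ _ := ⟨mod_cast (hC.pattern _).nonneg _ _, mod_cast (hC.pattern _).le _ _⟩
  row_zero _ := Int.cast_eq_zero.2 <| (hC.pattern _).eq_zero_of_le (by simp) _
  col_zero _ := Int.cast_eq_zero.2 <| (hC.pattern _).eq_zero_of_le_row (by omega) (by simp)
  row_top _ := Int.cast_inj.2 <| (hC.pattern _).eq_of_neg (by omega) _
  col_top _ := Int.cast_inj.2 <| (hC.pattern _).eq_of_le_add_row (by omega) (by omega)

lemma isPLRowmotion_shearedPattern (hC : IsPromotionOrbit a b (a + q) C) (l : ℕ) :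
    IsPLRowmotion a q (fun r c => shearedPattern a q C l r c)
      fun r c => shearedPattern a q C (l + 1) r c := by
  intro r c hr hc
  set i := l + q - (c + 1)
  set d : ℤ := c + a - r
  set x : ℤ := a - r - 1
  have new := shearedPattern_eq C (show i + 1 + (c + 1) = l + 1 + q by omega)
    (show d = (c + 1 : ℕ) + a - (r + 1 : ℕ) by omega) (show x = a - (r + 1 : ℕ) by omega)
  have old := shearedPattern_eq C (show i + (c + 1) = l + q by omega)
    (show d = (c + 1 : ℕ) + a - (r + 1 : ℕ) by omega) (show x = a - (r + 1 : ℕ) by omega)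
  have down := shearedPattern_eq C (show i + (c + 1) = l + q by omega)
    (show d + 1 = (c + 1 : ℕ) + a - r by omega) (show x + 1 = a - r by omega)
  have left := shearedPattern_eq C (show i + 1 + c = l + q by omega)
    (show d - 1 = c + a - (r + 1 : ℕ) by omega) (show x = a - (r + 1 : ℕ) by omega)
  have up := shearedPattern_eq C (show i + 1 + (c + 1) = l + 1 + q by omega)
    (show d - 1 = (c + 1 : ℕ) + a - (r + 2 : ℕ) by omega) (show x - 1 = a - (r + 2 : ℕ) by omega)
  have right := shearedPattern_eq C (show i + (c + 2) = l + 1 + q by omega)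
    (show d + 1 = (c + 2 : ℕ) + a - (r + 1 : ℕ) by omega) (show x = a - (r + 1 : ℕ) by omega)
  simp only [new, old, down, left, up, right]
  exact_mod_cast hC.toggle i (show 1 ≤ d by omega) (by omega) x

lemma add_antipodal_interior (hC : IsPromotionOrbit a b (a + q) C) {i n r c : ℕ} (hr : r < a)
    (hc : c < q) (hi : c ≤ i) (hn : n + c = q + r) :
    C (i + n) (c + a - r) (a - r - 1) + C i n r = b := by
  have label := shearedPattern_eq C (show i + n + (c + 1) = (i - c + r + c + 1) + q by omega)
    (show (c + a - r : ℤ) = (c + 1 : ℕ) + a - (r + 1 : ℕ) by omega)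
    (show (a - r - 1 : ℤ) = a - (r + 1 : ℕ) by omega)
  have antipodal := shearedPattern_eq C (show i + (q - 1 - c + 1) = (i - c) + q by omega)
    (show (n : ℤ) = (q - 1 - c + 1 : ℕ) + a - (a - 1 - r + 1 : ℕ) by omega)
    (show (r : ℤ) = a - (a - 1 - r + 1 : ℕ) by omega)
  rw [← label, ← antipodal]
  exact_mod_cast plRowmotion_reciprocity hC.isPLLabeling_shearedPattern
    hC.isPLRowmotion_shearedPattern rfl (by omega) (by omega)

lemma add_antipodal_of_le (hC : IsPromotionOrbit a b k C) {i : ℕ} (hi : k ≤ i) (n : ℕ) (x : ℤ) :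
    C (i + n) (k - n) x + C i n (a - 1 - x) = b := by
  have pattern := hC.pattern i
  have pattern' := hC.pattern (i + n)
  obtain hx | hx := lt_or_ge x 0
  · rw [pattern'.eq_of_neg hx, pattern.eq_zero_of_le (by omega), add_zero]
  obtain hxa | hxa := le_or_gt (a : ℤ) x
  · rw [pattern'.eq_zero_of_le hxa, pattern.eq_of_neg (by omega), zero_add]
  obtain hd | hd := le_or_gt (k - n : ℤ) x
  · rw [pattern'.eq_zero_of_le_row hx hd, pattern.eq_of_le_add_row (by omega) (by omega), zero_add]
  obtain hn | hn := le_or_gt (n : ℤ) (a - 1 - x)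
  · rw [pattern'.eq_of_le_add_row hxa (by omega), pattern.eq_zero_of_le_row (by omega) hn, add_zero]
  obtain ⟨q, rfl⟩ : ∃ q, k = a + q := ⟨k - a, by omega⟩
  convert hC.add_antipodal_interior (i := i) (n := n) (r := (a - 1 - x).toNat)
    (c := (a + q - n - 1 - x).toNat) (by omega) (by omega) (by omega) (by omega) using 3 <;> omega

lemma periodic_of_le (hC : IsPromotionOrbit a b k C) {i : ℕ} (hi : k ≤ i) : C (i + k) = C i := by
  ext d x
  by_cases hd : d ≤ 0 ∨ k ≤ d
  · exact (hC.pattern _).eq_of_le_zero_or_le (hC.pattern _) hd x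
  obtain ⟨n, rfl⟩ := Int.eq_ofNat_of_zero_le (show 0 ≤ d by omega)
  have first := hC.add_antipodal_of_le hi n (a - 1 - x)
  have second := hC.add_antipodal_of_le (i := i + n) (by omega) (k - n) x
  rw [show i + n + (k - n) = i + k by omega, show (k - (k - n : ℕ) : ℤ) = n by omega,
    show ((k - n : ℕ) : ℤ) = k - n by omega] at second
  rw [sub_sub_cancel] at first
  omega

lemma eq_of_succ_eq (hC : IsPromotionOrbit a b k C) {i j : ℕ} (hij : C (i + 1) = C (j + 1)) :
    C i = C j := by
  suffices agree : ∀ (n : ℕ) (d : ℤ), k ≤ d + n → C i d = C j d from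
    funext fun d => agree (k - d).toNat d (by omega)
  intro n
  induction n with
  | zero =>
    intro d hd
    exact funext <| (hC.pattern i).eq_of_le_zero_or_le (hC.pattern j) (by omega)
  | succ n ih =>
    intro d hd
    ext x
    by_cases hd' : d ≤ 0 ∨ k ≤ d
    · exact (hC.pattern i).eq_of_le_zero_or_le (hC.pattern j) hd' x
    have toggle_i := hC.toggle i (d := d) (by omega) (by omega) x
    have toggle_j := hC.toggle j (d := d) (by omega) (by omega) x
    rw [hij, ih (d + 1) (by omega)] at toggle_i
    omega

theorem periodic (hC : IsPromotionOrbit a b k C) : Function.Periodic C k := by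
  suffices descend : ∀ n i, k ≤ i + n → C (i + k) = C i from fun i => descend k i (by omega)
  intro n
  induction n with
  | zero => exact fun i hi => hC.periodic_of_le hi
  | succ n ih =>
    intro i hi
    have succ_eq := ih (i + 1) (by omega)
    rw [add_right_comm] at succ_eq
    exact hC.eq_of_succ_eq succ_eq

theorem add_antipodal (hC : IsPromotionOrbit a b k C) (i n : ℕ) (x : ℤ) :
    C (i + n) (k - n) x + C i n (a - 1 - x) = b := by
  have reciprocal := hC.add_antipodal_of_le (i := i + k) (by omega) n x
  rwa [add_right_comm, hC.periodic, hC.periodic] at reciprocal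

end IsPromotionOrbit

end Promotion

section Toggle

/-- The least value that the entry `C j x` of a Gelfand–Tsetlin pattern can take, given the other
entries. -/
def toggleLower (C : ℤ → ℤ → ℤ) (j x : ℤ) : ℤ := max (C (j + 1) (x + 1)) (C (j - 1) x)

/-- The greatest value that the entry `C j x` of a Gelfand–Tsetlin pattern can take, given the other
entries. -/
def toggleUpper (C : ℤ → ℤ → ℤ) (j x : ℤ) : ℤ := min (C (j - 1) (x - 1)) (C (j + 1) x)

/-- The piecewise-linear toggle of the row `C j` of a Gelfand–Tsetlin pattern: every entry is
reflected in the interval of its possible values. -/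
def toggle (j : ℤ) (C : ℤ → ℤ → ℤ) (d x : ℤ) : ℤ :=
  if d = j then toggleLower C j x + toggleUpper C j x - C j x else C d x

lemma toggle_self (j : ℤ) (C : ℤ → ℤ → ℤ) (x : ℤ) :
    toggle j C j x = toggleLower C j x + toggleUpper C j x - C j x :=
  if_pos rfl

lemma toggle_of_ne {d j : ℤ} (hd : d ≠ j) (C : ℤ → ℤ → ℤ) : toggle j C d = C d :=
  funext fun _ => if_neg hd

namespace IsGelfandTsetlin

variable {a b k : ℕ} {C : ℤ → ℤ → ℤ} {j : ℤ}

lemma toggleLower_le (hC : IsGelfandTsetlin a b k C) (j x : ℤ) : toggleLower C j x ≤ C j x :=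
  max_le (hC.interlace j x) (hC.monotone x (sub_le_self j zero_le_one))

lemma le_toggleUpper (hC : IsGelfandTsetlin a b k C) (j x : ℤ) : C j x ≤ toggleUpper C j x := by
  have interlace := hC.interlace (j - 1) (x - 1)
  rw [sub_add_cancel, sub_add_cancel] at interlace
  exact le_min interlace (hC.le_succ j x)

lemma toggle_self_mem_Icc (hC : IsGelfandTsetlin a b k C) (j x : ℤ) :
    toggle j C j x ∈ Set.Icc (toggleLower C j x) (toggleUpper C j x) := by
  have lower := hC.toggleLower_le j x
  have upper := hC.le_toggleUpper j x
  rw [toggle_self]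
  constructor <;> omega

lemma toggle_eq_of_eq (hC : IsGelfandTsetlin a b k C) {x m : ℤ} (hm : ∀ d, C d x = m) (j d : ℤ) :
    toggle j C d x = m := by
  by_cases hd : d = j
  · subst hd
    obtain ⟨lower, upper⟩ := hC.toggle_self_mem_Icc d x
    exact ((upper.trans (min_le_right _ _)).trans_eq (hm _)).antisymm
      ((hm _).symm.trans_le <| (le_max_right _ _).trans lower)
  · rw [toggle_of_ne hd, hm]

lemma isGelfandTsetlin_toggle (hC : IsGelfandTsetlin a b k C) (hj : 1 ≤ j) (hjk : j < k) :
    IsGelfandTsetlin a b k (toggle j C) where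
  le_succ d x := by
    by_cases hd : d = j
    · subst hd
      rw [toggle_of_ne (by omega : d + 1 ≠ d)]
      exact (hC.toggle_self_mem_Icc d x).2.trans (min_le_right _ _)
    by_cases hd' : d + 1 = j
    · subst hd'
      rw [toggle_of_ne hd]
      nth_rw 1 [← add_sub_cancel_right d 1]
      exact (le_max_right _ _).trans (hC.toggle_self_mem_Icc (d + 1) x).1
    · rw [toggle_of_ne hd, toggle_of_ne hd']
      exact hC.le_succ d x
  interlace d x := by
    by_cases hd : d = j
    · subst hd
      rw [toggle_of_ne (by omega : d + 1 ≠ d)]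
      exact (le_max_left _ _).trans (hC.toggle_self_mem_Icc d x).1
    by_cases hd' : d + 1 = j
    · subst hd'
      rw [toggle_of_ne hd]
      have upper := (hC.toggle_self_mem_Icc (d + 1) (x + 1)).2.trans (min_le_left _ _)
      rwa [add_sub_cancel_right, add_sub_cancel_right] at upper
    · rw [toggle_of_ne hd, toggle_of_ne hd']
      exact hC.interlace d x
  eq_zero_of_nonpos hd hx := by
    rw [toggle_of_ne (by omega), hC.eq_zero_of_nonpos hd hx]
  eq_of_le hd hx := by
    rw [toggle_of_ne (by omega), hC.eq_of_le hd hx]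
  eq_of_neg hx := hC.toggle_eq_of_eq (hC.eq_of_neg hx) j
  eq_zero_of_le hx := hC.toggle_eq_of_eq (hC.eq_zero_of_le hx) j

end IsGelfandTsetlin

end Toggle

section Tableaux

lemma lt_card_filter_iff_of_antitone {b : ℕ} {Q : Fin b → Prop} [DecidablePred Q]
    (hQ : Antitone Q) (y : Fin b) : (y : ℕ) < Finset.card {y | Q y} ↔ Q y := by
  constructor
  · intro hy
    by_contra hQy
    have subset : ({y | Q y} : Finset (Fin b)) ⊆ Finset.Iio y := fun z hz => by
      rw [Finset.mem_Iio]
      by_contra hyz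
      exact hQy (hQ (not_lt.1 hyz) (Finset.mem_filter_univ z |>.1 hz))
    exact hy.not_ge <| (Finset.card_le_card subset).trans_eq (Fin.card_Iio y)
  · intro hQy
    have subset : Finset.Iic y ⊆ ({y | Q y} : Finset (Fin b)) := fun z hz =>
      Finset.mem_filter_univ z |>.2 (hQ (Finset.mem_Iic.1 hz) hQy)
    exact (Fin.card_Iic y).symm.trans_le (Finset.card_le_card subset)

lemma card_filter_fin_mem_Ico {b : ℕ} {s e : ℤ} (hs : 0 ≤ s) (hse : s ≤ e) (he : e ≤ b) :
    (Finset.card {y : Fin b | s ≤ (y : ℤ) ∧ (y : ℤ) < e} : ℤ) = e - s := by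
  have image : ({y : Fin b | s ≤ (y : ℤ) ∧ (y : ℤ) < e} : Finset (Fin b)).map Fin.valEmbedding =
      Finset.Ico s.toNat e.toNat := by
    ext n
    simp only [Finset.mem_map, Finset.mem_filter_univ, Fin.valEmbedding_apply, Finset.mem_Ico]
    exact ⟨fun ⟨_, _, _⟩ => by omega, fun hn => ⟨⟨n, by omega⟩, by simp only; omega, rfl⟩⟩
  rw [← Finset.card_map Fin.valEmbedding, image, Nat.card_Ico]
  omega

/-- The number of entries at most `d` in row `x` of `T`, extended by `b` to the rows above the
rectangle and by `0` to those below it. -/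
noncomputable def rowCount {a b : ℕ} (T : Fin a → Fin b → ℤ) (d x : ℤ) : ℤ :=
  Finset.card {y : Fin b | x < a ∧ ∀ x' : Fin a, (x' : ℤ) = x → T x' y ≤ d}

/-- Row `x` of the filling `T` consists of `C 1 x` ones, then `C 2 x - C 1 x` twos, and so on. -/
def IsEncodedBy {a b : ℕ} (T : Fin a → Fin b → ℤ) (C : ℤ → ℤ → ℤ) : Prop :=
  ∀ x y d, T x y ≤ d ↔ (y : ℤ) < C d x

variable {a b k : ℕ} {T : Fin a → Fin b → ℤ} {C : ℤ → ℤ → ℤ} {j : ℤ}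

lemma rowCount_fin (T : Fin a → Fin b → ℤ) (d : ℤ) (x : Fin a) :
    rowCount T d x = Finset.card {y : Fin b | T x y ≤ d} := by
  have row_iff (y : Fin b) : ((x : ℤ) < a ∧ ∀ x' : Fin a, (x' : ℤ) = x → T x' y ≤ d) ↔ T x y ≤ d :=
    ⟨fun h => h.2 x rfl,
      fun h => ⟨by omega, fun x' hx' => by rwa [Fin.ext (by omega : x'.1 = x.1)]⟩⟩
  simp only [rowCount, row_iff]

lemma rowCount_of_neg (T : Fin a → Fin b → ℤ) (d : ℤ) {x : ℤ} (hx : x < 0) :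
    rowCount T d x = b := by
  rw [rowCount, Finset.filter_true_of_mem fun y _ => ⟨by omega, fun x' _ => by omega⟩,
    Finset.card_univ, Fintype.card_fin]

lemma rowCount_of_le (T : Fin a → Fin b → ℤ) (d : ℤ) {x : ℤ} (hx : a ≤ x) :
    rowCount T d x = 0 :=
  Nat.cast_eq_zero.2 <| Finset.card_filter_eq_zero_iff.2 fun _ _ h => h.1.not_ge hx

lemma bcount_eq_sub_rowCount (T : Fin a → Fin b → ℤ) (x : Fin a) (d : ℤ) :
    (bcount a b T x d : ℤ) = b - rowCount T d x := by
  have total := Finset.card_filter_add_card_filter_not (s := Finset.univ) fun y : Fin b => T x y ≤ d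
  simp only [not_le, Finset.card_univ, Fintype.card_fin] at total
  rw [rowCount_fin, bcount, eq_sub_iff_add_eq']
  exact_mod_cast total

lemma IsSSYT.isEncodedBy_rowCount (hT : IsSSYT a b k T) : IsEncodedBy T (rowCount T) := by
  intro x y d
  have row_antitone : Antitone fun y => T x y ≤ d := fun y y' hy h => (hT.2.1 x y y' hy).trans h
  rw [rowCount_fin, Nat.cast_lt, lt_card_filter_iff_of_antitone row_antitone]

lemma IsSSYT.isGelfandTsetlin_rowCount (hT : IsSSYT a b k T) :
    IsGelfandTsetlin a b k (rowCount T) where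
  le_succ d x := by
    refine Nat.cast_le.2 <| Finset.card_le_card <| Finset.monotone_filter_right _ fun y _ h => ?_
    exact ⟨h.1, fun x' hx' => (h.2 x' hx').trans (by omega)⟩
  interlace d x := by
    refine Nat.cast_le.2 <| Finset.card_le_card <| Finset.monotone_filter_right _ fun y _ h => ?_
    refine ⟨by omega, fun x' hx' => ?_⟩
    have below := h.2 ⟨x' + 1, by omega⟩ (by push_cast; omega)
    have strict := hT.2.2 y x' ⟨x' + 1, by omega⟩ (Nat.lt_succ_self x')
    omega
  eq_zero_of_nonpos {d x} hd hx := by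
    refine Nat.cast_eq_zero.2 <| Finset.card_filter_eq_zero_iff.2 fun y _ h => ?_
    have entry := h.2 ⟨x.toNat, by omega⟩ (by simp [hx])
    have pos := (hT.1 ⟨x.toNat, by omega⟩ y).1
    omega
  eq_of_le hd hx := by
    rw [rowCount, Finset.filter_true_of_mem fun y _ => ⟨hx, fun x' _ => (hT.1 x' y).2.trans hd⟩,
      Finset.card_univ, Fintype.card_fin]
  eq_of_neg hx d := rowCount_of_neg T d hx
  eq_zero_of_le hx d := rowCount_of_le T d hx

namespace IsEncodedBy

lemma rowCount_eq (hTC : IsEncodedBy T C) (hC : IsGelfandTsetlin a b k C) : rowCount T = C := by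
  ext d x
  obtain hx | hx := lt_or_ge x 0
  · rw [hC.eq_of_neg hx, rowCount_of_neg T d hx]
  obtain hxa | hxa := le_or_gt (a : ℤ) x
  · rw [hC.eq_zero_of_le hxa, rowCount_of_le T d hxa]
  obtain ⟨x, rfl⟩ : ∃ x' : Fin a, (x' : ℤ) = x := ⟨⟨x.toNat, by omega⟩, Int.toNat_of_nonneg hx⟩
  have count := card_filter_fin_mem_Ico le_rfl (hC.nonneg d x) (hC.le d x)
  rw [rowCount_fin, ← sub_zero (C d x), ← count]
  simp only [hTC x _ d, Nat.cast_nonneg, true_and]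

lemma lt_of_row_lt (hTC : IsEncodedBy T C) (hC : IsGelfandTsetlin a b k C) {x x' : Fin a}
    (hx : x < x') (y : Fin b) : T x y < T x' y := by
  obtain ⟨n, hn⟩ : ∃ n : ℕ, (x' : ℕ) = x + n := ⟨x' - x, by omega⟩
  have interlace := hC.interlace_add (T x' y - n) x n
  rw [sub_add_cancel, ← Nat.cast_add, ← hn] at interlace
  have entry := (hTC x y (T x' y - n)).2 <| ((hTC x' y _).1 le_rfl).trans_le interlace
  omega

lemma isSSYT (hTC : IsEncodedBy T C) (hC : IsGelfandTsetlin a b k C) : IsSSYT a b k T := by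
  refine ⟨fun x y => ⟨?_, ?_⟩, fun x y y' hy => ?_, fun y x x' hx => hTC.lt_of_row_lt hC hx y⟩
  · have not_le := mt (hTC x y 0).1 (by rw [hC.eq_zero_of_nonpos le_rfl] <;> omega)
    omega
  · rw [hTC, hC.eq_of_le le_rfl] <;> omega
  · rw [hTC]
    have last := (hTC x y' (T x y')).1 le_rfl
    omega

lemma freeLow_iff (hTC : IsEncodedBy T C) (hC : IsGelfandTsetlin a b k C) (j : ℤ) (x : Fin a)
    (y : Fin b) : (T x y = j ∧ ∀ h : (x : ℕ) + 1 < a, T ⟨x + 1, h⟩ y ≠ j + 1) ↔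
      toggleLower C j x ≤ y ∧ (y : ℤ) < C j x := by
  have le_iff := hTC x y j
  have lt_iff := hTC x y (j - 1)
  rw [toggleLower, max_le_iff]
  by_cases hx : (x : ℕ) + 1 < a
  · have below_iff := hTC ⟨x + 1, hx⟩ y (j + 1)
    have strict := hTC.lt_of_row_lt hC (show x < ⟨x + 1, hx⟩ from Nat.lt_succ_self x) y
    simp only [hx, forall_true_left]
    push_cast at below_iff
    omega
  · have bottom := hC.eq_zero_of_le (x := x + 1) (by omega) (j + 1)
    simp only [hx, IsEmpty.forall_iff, and_true]
    omega

lemma freeHigh_iff (hTC : IsEncodedBy T C) (hC : IsGelfandTsetlin a b k C) (j : ℤ) (x : Fin a)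
    (y : Fin b) : (T x y = j + 1 ∧ ∀ x' : Fin a, (x' : ℕ) + 1 = x → T x' y ≠ j) ↔
      C j x ≤ y ∧ (y : ℤ) < toggleUpper C j x := by
  have le_iff := hTC x y j
  have le_succ_iff := hTC x y (j + 1)
  rw [toggleUpper, lt_min_iff]
  by_cases hx : (x : ℕ) = 0
  · have top := hC.eq_of_neg (x := x - 1) (by omega) (j - 1)
    have no_row_above : ∀ x' : Fin a, (x' : ℕ) + 1 = x → T x' y ≠ j := fun x' hx' => by omega
    rw [and_iff_left no_row_above]
    omega
  · obtain ⟨x', hx'⟩ : ∃ x' : Fin a, (x' : ℕ) + 1 = x := ⟨⟨x - 1, by omega⟩, by simp only; omega⟩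
    have above_iff := hTC x' y (j - 1)
    have strict := hTC.lt_of_row_lt hC (show x' < x by omega) y
    have row_above (P : Fin a → Prop) : (∀ z : Fin a, (z : ℕ) + 1 = x → P z) ↔ P x' :=
      ⟨fun h => h x' hx', fun h z hz => by rwa [Fin.ext (by omega : z.1 = x'.1)]⟩
    rw [row_above, show (x : ℤ) - 1 = x' by omega]
    omega

lemma bk_apply (hTC : IsEncodedBy T C) (hC : IsGelfandTsetlin a b k C) (j : ℤ) (x : Fin a)
    (y : Fin b) : bk a b j T x y =
      if toggleLower C j x ≤ y ∧ (y : ℤ) < toggleUpper C j x then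
        if (y : ℤ) < toggle j C j x then j else j + 1
      else T x y := by
  have lower_le := hC.toggleLower_le j x
  have le_upper := hC.le_toggleUpper j x
  have free_iff (y : Fin b) : (toggleLower C j x ≤ y ∧ (y : ℤ) < C j x ∨
      C j x ≤ y ∧ (y : ℤ) < toggleUpper C j x) ↔
      toggleLower C j x ≤ y ∧ (y : ℤ) < toggleUpper C j x := by omega
  simp only [bk, hTC.freeLow_iff hC, hTC.freeHigh_iff hC, free_iff]
  refine if_ctx_congr Iff.rfl (fun hy => ?_) fun _ => rfl
  have high_card := card_filter_fin_mem_Ico (hC.nonneg j x) le_upper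
    ((min_le_right _ _).trans (hC.le (j + 1) x))
  have rank := card_filter_fin_mem_Ico (s := toggleLower C j x)
    ((hC.nonneg (j - 1) x).trans (le_max_right _ _))
    (show toggleLower C j x ≤ y + 1 by omega) (show (y + 1 : ℤ) ≤ b by omega)
  have initial_iff (z : Fin b) : ((toggleLower C j x ≤ z ∧ (z : ℤ) < toggleUpper C j x) ∧ z ≤ y) ↔
      toggleLower C j x ≤ z ∧ (z : ℤ) < y + 1 := by omega
  simp only [initial_iff, toggle_self]
  refine if_congr ?_ rfl rfl
  omega

lemma isEncodedBy_bk_toggle (hTC : IsEncodedBy T C) (hC : IsGelfandTsetlin a b k C) (j : ℤ) :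
    IsEncodedBy (bk a b j T) (toggle j C) := by
  intro x y d
  obtain ⟨lower_le, le_upper⟩ := hC.toggle_self_mem_Icc j x
  have lt_lower : C (j - 1) x ≤ toggleLower C j x := le_max_right _ _
  have upper_le : toggleUpper C j x ≤ C (j + 1) x := min_le_right _ _
  have entry_iff := hTC x y d
  have lt_iff := hTC x y (j - 1)
  have le_iff := hTC x y j
  have le_succ_iff := hTC x y (j + 1)
  have lower_le' := hC.toggleLower_le j x
  have le_upper' := hC.le_toggleUpper j x
  rw [hTC.bk_apply hC]
  by_cases hd : d = j
  · subst hd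
    split_ifs <;> omega
  · rw [toggle_of_ne hd]
    split_ifs <;> omega

end IsEncodedBy

lemma IsSSYT.isSSYT_bk (hT : IsSSYT a b k T) (hj : 1 ≤ j) (hjk : j < k) :
    IsSSYT a b k (bk a b j T) :=
  (hT.isEncodedBy_rowCount.isEncodedBy_bk_toggle hT.isGelfandTsetlin_rowCount j).isSSYT
    (hT.isGelfandTsetlin_rowCount.isGelfandTsetlin_toggle hj hjk)

lemma IsSSYT.rowCount_bk (hT : IsSSYT a b k T) (hj : 1 ≤ j) (hjk : j < k) :
    rowCount (bk a b j T) = toggle j (rowCount T) :=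
  (hT.isEncodedBy_rowCount.isEncodedBy_bk_toggle hT.isGelfandTsetlin_rowCount j).rowCount_eq
    (hT.isGelfandTsetlin_rowCount.isGelfandTsetlin_toggle hj hjk)

/-- The composition `ρ_n ∘ ⋯ ∘ ρ_1` of the first `n` Bender–Knuth involutions of promotion. -/
noncomputable def partialPro (a b : ℕ) (T : Fin a → Fin b → ℤ) : ℕ → Fin a → Fin b → ℤ
  | 0 => T
  | n + 1 => bk a b (n + 1) (partialPro a b T n)

lemma pro_eq_partialPro (a b k : ℕ) (T : Fin a → Fin b → ℤ) :
    pro a b k T = partialPro a b T (k - 1) := by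
  have coe_range (n : ℕ) : (List.range n).flatMap (fun i : ℕ => [(i : ℤ)]) =
      (List.range n).map fun i : ℕ => (i : ℤ) := List.map_eq_flatMap.symm
  simp only [pro, List.pure_def, List.bind_eq_flatMap, coe_range, List.foldl_map]
  induction k - 1 with
  | zero => rfl
  | succ n ih =>
    rw [List.range_succ, List.foldl_append, ih, List.foldl_cons, List.foldl_nil, partialPro]

namespace IsSSYT

lemma isSSYT_partialPro (hT : IsSSYT a b k T) {n : ℕ} (hn : n ≤ k - 1) :
    IsSSYT a b k (partialPro a b T n) := by
  induction n with
  | zero => exact hT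
  | succ n ih => exact (ih (by omega)).isSSYT_bk (by omega) (by omega)

lemma rowCount_partialPro_succ (hT : IsSSYT a b k T) {n : ℕ} (hn : n < k - 1) :
    rowCount (partialPro a b T (n + 1)) = toggle (n + 1) (rowCount (partialPro a b T n)) :=
  (hT.isSSYT_partialPro hn.le).rowCount_bk (by omega) (by omega)

lemma rowCount_partialPro_eq (hT : IsSSYT a b k T) {m n : ℕ} (hmn : m ≤ n) (hn : n ≤ k - 1)
    {d : ℤ} (hd : d ≤ m ∨ n < d) :
    rowCount (partialPro a b T n) d = rowCount (partialPro a b T m) d := by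
  induction n, hmn using Nat.le_induction with
  | base => rfl
  | succ n hmn ih =>
    rw [hT.rowCount_partialPro_succ (by omega), toggle_of_ne (by omega), ih (by omega) (by omega)]

lemma isSSYT_pro (hT : IsSSYT a b k T) : IsSSYT a b k (pro a b k T) := by
  rw [pro_eq_partialPro]
  exact hT.isSSYT_partialPro le_rfl

lemma rowCount_pro_add (hT : IsSSYT a b k T) {d : ℤ} (hd : 1 ≤ d) (hdk : d < k) (x : ℤ) :
    rowCount (pro a b k T) d x + rowCount T d x =
      max (rowCount T (d + 1) (x + 1)) (rowCount (pro a b k T) (d - 1) x) +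
        min (rowCount (pro a b k T) (d - 1) (x - 1)) (rowCount T (d + 1) x) := by
  obtain ⟨n, rfl⟩ : ∃ n : ℕ, d = n + 1 := ⟨(d - 1).toNat, by omega⟩
  have untouched {e : ℤ} (he : n < e) : rowCount (partialPro a b T n) e = rowCount T e :=
    hT.rowCount_partialPro_eq n.zero_le (by omega) (Or.inr he)
  have finished {m : ℕ} (hm : m ≤ k - 1) :
      rowCount (pro a b k T) m = rowCount (partialPro a b T m) m := by
    rw [pro_eq_partialPro, hT.rowCount_partialPro_eq hm le_rfl (Or.inl le_rfl)]
  have toggled := congr_fun (finished (m := n + 1) (by omega)) x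
  rw [hT.rowCount_partialPro_succ (by omega), Nat.cast_succ, toggle_self, toggleLower, toggleUpper,
    untouched (e := n + 1 + 1) (by omega), untouched (e := n + 1) (by omega), add_sub_cancel_right,
    ← finished (by omega)] at toggled
  rw [toggled, add_sub_cancel_right, sub_add_cancel]

lemma isSSYT_iterate_pro (hT : IsSSYT a b k T) (i : ℕ) : IsSSYT a b k ((pro a b k)^[i] T) := by
  induction i with
  | zero => exact hT
  | succ i ih =>
    rw [Function.iterate_succ_apply']
    exact ih.isSSYT_pro

theorem isPromotionOrbit_rowCount (hT : IsSSYT a b k T) :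
    IsPromotionOrbit a b k fun i => rowCount ((pro a b k)^[i] T) where
  pattern i := (hT.isSSYT_iterate_pro i).isGelfandTsetlin_rowCount
  toggle i d hd hdk x := by
    simp only [Function.iterate_succ_apply']
    exact (hT.isSSYT_iterate_pro i).rowCount_pro_add hd hdk x

end IsSSYT

end Tableaux

section Distribution

lemma map_range_add_of_periodic {α : Type*} {k : ℕ} {f : ℕ → α} (hf : Function.Periodic f k)
    (n : ℕ) : (Multiset.range k).map (fun i => f (i + n)) = (Multiset.range k).map f := by
  have residues : (Multiset.Ico n (n + k)).map f = (Multiset.range k).map f := by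
    rw [← Nat.multiset_Ico_map_mod n k, Multiset.map_map]
    exact Multiset.map_congr rfl fun i _ => (hf.map_mod_nat i).symm
  have range_eq : Multiset.range k = Multiset.Ico 0 k :=
    congr_arg Finset.val (Finset.range_eq_Ico k)
  have shift := Multiset.map_add_right_Ico 0 k n
  rw [zero_add, add_comm k, ← range_eq] at shift
  rw [← residues, ← shift, Multiset.map_map, Function.comp_def]

lemma IsPromotionOrbit.map_range_antipodal {a b k : ℕ} {C : ℕ → ℤ → ℤ → ℤ}
    (hC : IsPromotionOrbit a b k C) {x : ℤ} (hx : x < a) (d : ℤ) :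
    (Multiset.range k).map (fun i => b - C i (k - d) (a - 1 - x)) =
      (Multiset.range k).map fun i => C i d x := by
  obtain hd | hd := le_or_gt d k
  · have shift := map_range_add_of_periodic (f := fun i => C i d x)
      (fun i => congr_fun₂ (hC.periodic i) d x) (k - d).toNat
    rw [← shift]
    refine Multiset.map_congr rfl fun i _ => ?_
    have antipodal := hC.add_antipodal i (k - d).toNat x
    rw [Int.toNat_of_nonneg (by omega), sub_sub_cancel] at antipodal
    omega
  · refine Multiset.map_congr rfl fun i _ => ?_
    rw [(hC.pattern i).eq_zero_of_nonpos (by omega) (by omega), (hC.pattern i).eq_of_le hd.le hx,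
      sub_zero]

end Distribution

/-- for `T ∈ SSYT_k(a × b)`, a row `x`, and `d ∈ ℤ`,
`BCDist(T, a+1−x, k−d) = {b − m : m ∈ BCDist(T, x, d)}`, where `a+1−x` is the row
corresponding to `x` under 180° rotation. -/
theorem ssyt_bcdist_antipodal (a b k : ℕ) (ha : 0 < a) (hb : 0 < b) (hk : 0 < k)
    (T : Fin a → Fin b → ℤ) (hT : IsSSYT a b k T) (x : Fin a) (d : ℤ) :
    BCDist a b k T x.rev ((k : ℤ) - d) =
      (BCDist a b k T x d).map (fun m => (b : ℤ) - m) := by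
  have antipodal := hT.isPromotionOrbit_rowCount.map_range_antipodal (x := x) (by omega) d
  have row_rev : (a - 1 - x : ℤ) = x.rev := by rw [Fin.val_rev]; omega
  simp only [BCDist, Multiset.map_map, Function.comp_def, bcount_eq_sub_rowCount, sub_sub_cancel]
  rw [← antipodal, row_rev]
end
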